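/- Let r ∈ ℕ with r ≥ 2 or r = ∞, and let f be a volume-preserving C^r diffeomorphism of T², isotopic to the identity, regularly semi-conjugate to the translation T_ω̄, where ω̄ ∈ ℝ²/ℤ² is totally irrational and super-Liouvillean. Let G_f be the set of centralizers of f in Diff^{r−1}(T², Vol) ∩ Homeo_*(T²). Then: (i) G_f is isomorphic (as a group) to an uncountable subgroup of ℝ²/ℤ²; (ii) if G_f is compact in the C⁰ topology, then f is topologically linearizable (topologically conjugate to a translation); (iii) if f is topologically linearizable, then G_f is pre-compact in the C⁰ topology. -/

import Mathlib

open Filter Topology MeasureTheory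

noncomputable section

/-- The plane ℝ². -/
abbrev R2 : Type := ℝ × ℝ

/-- The Euclidean norm on ℝ². -/
def enorm2 (v : R2) : ℝ := Real.sqrt (v.1 ^ 2 + v.2 ^ 2)

/-- The two-torus 𝕋² = ℝ²/ℤ². -/
abbrev T2 : Type := AddCircle (1 : ℝ) × AddCircle (1 : ℝ)

/-- The covering projection π : ℝ² → 𝕋². -/
def pr2 (v : R2) : T2 := ((v.1 : AddCircle (1 : ℝ)), (v.2 : AddCircle (1 : ℝ)))

/-- The integer vector (v₁, v₂) regarded as a point of ℝ². -/
def intVec (v : ℤ × ℤ) : R2 := ((v.1 : ℝ), (v.2 : ℝ))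

/-- The distance on 𝕋² induced by the Euclidean metric on ℝ². -/
def distT2 (x y : T2) : ℝ :=
  sInf {r | ∃ a b : R2, pr2 a = x ∧ pr2 b = y ∧ r = enorm2 (a - b)}

/-- The C⁰ distance between two maps of 𝕋². -/
def dC0 (f g : T2 → T2) : ℝ := ⨆ x : T2, distT2 (f x) (g x)

/-- `F : ℝ² → ℝ²` is a lift of `f : 𝕋² → 𝕋²`, i.e. π ∘ F = f ∘ π. -/
def IsLift (F : R2 → R2) (f : T2 → T2) : Prop := ∀ z : R2, pr2 (F z) = f (pr2 z)

/-- `F` commutes with the deck transformations of π : ℝ² → 𝕋². -/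
def Equivariant (F : R2 → R2) : Prop :=
  ∀ (z : R2) (v : ℤ × ℤ), F (z + intVec v) = F z + intVec v

/-- `f` is a homeomorphism of 𝕋² isotopic to the identity (equivalently, admitting an
equivariant lift to ℝ²). -/
def IsotopicToId (f : T2 → T2) : Prop :=
  IsHomeomorph f ∧ ∃ F : R2 → R2, IsHomeomorph F ∧ IsLift F f ∧ Equivariant F

/-- The Misiurewicz–Ziemian rotation set of a lift `F`. -/
def rotSet (F : R2 → R2) : Set R2 :=
  {v | ∃ (z : ℕ → R2) (n : ℕ → ℕ), Tendsto n atTop atTop ∧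
      Tendsto (fun i => ((n i : ℝ))⁻¹ • (F^[n i] (z i) - z i)) atTop (𝓝 v)}

/-- Bounded mean motion, with bound κ, for a lift `F` with rotation vector `ω`:
‖Fⁿ(z) − z − nω‖ ≤ κ for all z and n. -/
def BoundedMeanMotion (F : R2 → R2) (ω : R2) (κ : ℝ) : Prop :=
  ∀ (z : R2) (n : ℕ), enorm2 (F^[n] z - z - (n : ℝ) • ω) ≤ κ

/-- The standard scalar product on ℝ². -/
def inner2 (u v : R2) : ℝ := u.1 * v.1 + u.2 * v.2

/-- v^⊥ = (−v₂, v₁)/‖v‖. -/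
def perp2 (v : R2) : R2 := (-v.2 / enorm2 v, v.1 / enorm2 v)

/-- Bounded deviation parallel to `v`, with bound κ, for a lift `F` with rotation vector `ω`:
|⟨Fⁿ(z) − z − nω, v^⊥⟩| ≤ κ for all z and n. -/
def BoundedDeviation (F : R2 → R2) (ω : R2) (v : R2) (κ : ℝ) : Prop :=
  ∀ (z : R2) (n : ℕ), |inner2 (F^[n] z - z - (n : ℝ) • ω) (perp2 v)| ≤ κ

/-- ‖ω‖_{𝕋²} = min over integer vectors z of ‖ω − z‖. -/
def normT2 (ω : R2) : ℝ := ⨅ v : ℤ × ℤ, enorm2 (ω - intVec v)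

/-- The super-Liouvillean condition: liminf_{n→∞} n⁻¹ ln ‖nω‖_{𝕋²} = −∞. -/
def SuperLiouville (ω : R2) : Prop :=
  ∀ M : ℝ, ∃ᶠ n : ℕ in atTop, (n : ℝ)⁻¹ * Real.log (normT2 ((n : ℝ) • ω)) < M

/-- The strong super-Liouvillean condition: liminf_{n→∞} n⁻¹ aⁿ ln ‖nω‖_{𝕋²} = −∞. -/
def StrongSuperLiouville (a : ℝ) (ω : R2) : Prop :=
  ∀ M : ℝ, ∃ᶠ n : ℕ in atTop, (n : ℝ)⁻¹ * a ^ n * Real.log (normT2 ((n : ℝ) • ω)) < M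

/-- ω ∈ ℝ² is irrational if ω ∉ ℚ². -/
def IrrationalVec (ω : R2) : Prop := ¬ ∃ q : ℚ × ℚ, ω = ((q.1 : ℝ), (q.2 : ℝ))

/-- ω is totally irrational if ω₁, ω₂, 1 are rationally independent. -/
def TotallyIrrationalVec (ω : R2) : Prop :=
  ∀ d1 d2 e : ℤ, (d1 : ℝ) * ω.1 + (d2 : ℝ) * ω.2 + (e : ℝ) = 0 → d1 = 0 ∧ d2 = 0 ∧ e = 0

/-- ω is semi-irrational: irrational but not totally irrational. -/
def SemiIrrationalVec (ω : R2) : Prop := IrrationalVec ω ∧ ¬ TotallyIrrationalVec ω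

/-- `v` is a character vector of the semi-irrational vector ω. -/
def IsCharacterVector (ω : R2) (v : R2) : Prop :=
  ∃ c d : ℤ, Int.gcd c d = 1 ∧ (∃ e : ℚ, (c : ℝ) * ω.1 + (d : ℝ) * ω.2 + (e : ℝ) = 0) ∧
    v = ((d : ℝ), (-c : ℝ))

/-- `f` is Hölder continuous with exponent `a`. -/
def HolderMap (a : ℝ) (f : T2 → T2) : Prop :=
  ∃ C : ℝ, ∀ x y : T2, distT2 (f x) (f y) ≤ C * distT2 x y ^ a

/-- C⁰-rigidity: liminf_{n→∞} d_{C⁰}(fⁿ, Id) = 0. -/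
def C0Rigid (f : T2 → T2) : Prop :=
  ∀ ε : ℝ, 0 < ε → ∃ᶠ n : ℕ in atTop, dC0 (f^[n]) id < ε

/-- `f` is a C^r diffeomorphism of 𝕋², expressed via a C^r lift with a C^r inverse. -/
def IsCrDiffeo (r : ℕ∞) (f : T2 → T2) : Prop :=
  ∃ F G : R2 → R2, IsLift F f ∧ Function.LeftInverse G F ∧ Function.RightInverse G F ∧
    ContDiff ℝ r F ∧ ContDiff ℝ r G

/-- C^k-rigidity: some sequence of iterates f^{n_j}, n_j → ∞, converges to the identity in the
C^k topology, i.e. admits lifts converging to the identity uniformly together with all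
derivatives of order ≤ k. -/
def CkRigid (k : ℕ∞) (f : T2 → T2) : Prop :=
  ∃ n : ℕ → ℕ, Tendsto n atTop atTop ∧
    ∃ F : ℕ → R2 → R2, (∀ j, IsLift (F j) (f^[n j])) ∧
      ∀ i : ℕ, (i : ℕ∞) ≤ k →
        Tendsto (fun j => ⨆ z : R2, ‖iteratedFDeriv ℝ i (fun w => F j w - w) z‖)
          atTop (𝓝 0)

/-- ‖x‖_𝕋 : the distance from x ∈ ℝ to the nearest integer. -/
def dT (x : ℝ) : ℝ := |x - round x|

/-- `q` is the sequence of denominators of the best rational approximations of β. -/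
def BestDenomSeq (β : ℝ) (q : ℕ → ℕ) : Prop :=
  q 0 = 1 ∧ ∀ n : ℕ,
    q n < q (n + 1) ∧
    (∀ m : ℕ, 1 ≤ m → m < q (n + 1) → dT ((q n : ℝ) * β) ≤ dT ((m : ℝ) * β)) ∧
    dT ((q n : ℝ) * β) < 1 / (q (n + 1) : ℝ)

/-- β is of non-Brjuno type: Σ_n (ln q_{n+1})/q_n = ∞. -/
def NonBrjunoNum (β : ℝ) : Prop :=
  ∀ q : ℕ → ℕ, BestDenomSeq β q → ¬ Summable fun n => Real.log (q (n + 1) : ℝ) / (q n : ℝ)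

/-- Character data of a semi-irrational vector ω: (c,d) ∈ ℤ² with gcd(c,d)=1 and
e = p/q ∈ ℚ in lowest terms with q > 0 such that c ω₁ + d ω₂ + p/q = 0. -/
def IsCharData (ω : R2) (c d p q : ℤ) : Prop :=
  Int.gcd c d = 1 ∧ Int.gcd p q = 1 ∧ 0 < q ∧
    (c : ℝ) * ω.1 + (d : ℝ) * ω.2 + (p : ℝ) / (q : ℝ) = 0

/-- ω is of strong non-Brjuno type: its character frequency 𝓕(ω̄) is of non-Brjuno type. -/
def StrongNonBrjuno (ω : R2) : Prop :=
  ∃ c d p q a b : ℤ, IsCharData ω c d p q ∧ a * d - b * c = 1 ∧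
    NonBrjunoNum (dT ((q : ℝ) * ((a : ℝ) * ω.1 + (b : ℝ) * ω.2)))

/-- The linear action of the integer matrix [[a,b],[c,d]] on ℝ². -/
def AactZ (a b c d : ℤ) (z : R2) : R2 :=
  ((a : ℝ) * z.1 + (b : ℝ) * z.2, (c : ℝ) * z.1 + (d : ℝ) * z.2)

/-- The operator norm (w.r.t. the Euclidean norm) of the matrix [[a,b],[c,d]]. -/
def AOpNormZ (a b c d : ℤ) : ℝ :=
  sSup {r | ∃ u : R2, enorm2 u ≤ 1 ∧
    r = enorm2 ((a : ℝ) * u.1 + (b : ℝ) * u.2, (c : ℝ) * u.1 + (d : ℝ) * u.2)}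

/-- Membership in the class 𝒞_{κ,ω̄}: pseudo-rotations with rotation vector ω̄ mod ℤ²
having bounded mean motion with bound κ. -/
def MemC (κ : ℝ) (w : T2) (f : T2 → T2) : Prop :=
  IsotopicToId f ∧ ∃ (F : R2 → R2) (ω : R2),
    IsLift F f ∧ rotSet F = {ω} ∧ pr2 ω = w ∧ BoundedMeanMotion F ω κ

/-- Membership in the class 𝒟_{κ,ω̄,v}: pseudo-rotations with rotation vector ω̄ mod ℤ²
having bounded deviation parallel to v with bound κ. -/
def MemD (κ : ℝ) (w : T2) (v : R2) (f : T2 → T2) : Prop :=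
  IsotopicToId f ∧ ∃ (F : R2 → R2) (ω : R2),
    IsLift F f ∧ rotSet F = {ω} ∧ pr2 ω = w ∧ BoundedDeviation F ω v κ

/-- `h : 𝕋² → 𝕋²` is homotopic to the identity (characterised by admitting an equivariant
continuous lift). -/
def HomotopicToIdMap (h : T2 → T2) : Prop :=
  ∃ H : R2 → R2, Continuous H ∧ IsLift H h ∧ Equivariant H

/-- `f` is regularly semi-conjugate to the translation T_w : x ↦ x + w, i.e. semi-conjugate via
a continuous surjection homotopic to the identity. -/
def RegSemiConj (f : T2 → T2) (w : T2) : Prop :=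
  ∃ h : T2 → T2, Continuous h ∧ Function.Surjective h ∧ HomotopicToIdMap h ∧
    ∀ x : T2, h (f x) = h x + w

/-- `f` is topologically conjugate to a translation of 𝕋². -/
def TopLinearizable (f : T2 → T2) : Prop :=
  ∃ (w : T2) (h : T2 → T2), IsHomeomorph h ∧ ∀ x : T2, h (f x) = h x + w

/-- `f` is minimal: every orbit is dense. -/
def MinimalMap (f : T2 → T2) : Prop :=
  ∀ x : T2, Dense (Set.range fun n : ℕ => f^[n] x)

/-- The open ball in 𝕋² for the Euclidean-induced distance. -/
def ballT2 (z : T2) (r : ℝ) : Set T2 := {y | distT2 z y < r}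

/-- The diameter of a subset of 𝕋² for the Euclidean-induced distance. -/
def diamT2 (S : Set T2) : ℝ := sSup {r | ∃ x ∈ S, ∃ y ∈ S, r = distT2 x y}

/-- The Euclidean diameter of a subset of ℝ². -/
def diamE (S : Set R2) : ℝ := sSup {r | ∃ x ∈ S, ∃ y ∈ S, r = enorm2 (x - y)}

/-- `F` is a bounded (measurable) fundamental domain for the ℤ²-action on ℝ². -/
def IsBoundedFundDom (F : Set R2) : Prop :=
  MeasurableSet F ∧ Bornology.IsBounded F ∧
    (∀ x : R2, ∃ v : ℤ × ℤ, x - intVec v ∈ F) ∧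
    ∀ v : ℤ × ℤ, v ≠ 0 → F ∩ ((fun x => x + intVec v) '' F) = ∅

/-- `D` is an open topological disc in 𝕋². -/
def IsTopDisc (D : Set T2) : Prop :=
  IsOpen D ∧ Nonempty (D ≃ₜ Metric.ball (0 : R2) 1)

/-- `D` is simple with respect to the fundamental domain `F`: some connected component of
π⁻¹(D) is contained in `F`. -/
def IsSimpleDisc (D : Set T2) (F : Set R2) : Prop :=
  ∃ x ∈ pr2 ⁻¹' D, connectedComponentIn (pr2 ⁻¹' D) x ⊆ F

/-- `u` is the rotation vector of `g`, defined as the mean displacement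
∫_{𝕋²} (g̃(x̃) − x̃) dλ(x) mod ℤ² of an equivariant lift `G` of `g`. -/
def IsRotOf (g : T2 → T2) (u : T2) : Prop :=
  ∃ (G : R2 → R2) (Φ : T2 → R2), Continuous G ∧ IsLift G g ∧ Equivariant G ∧
    (∀ z : R2, Φ (pr2 z) = G z - z) ∧ u = pr2 (∫ x : T2, Φ x)

/-- The set Γ = ((ℚ×ℝ)/ℤ²) ∪ ((ℝ×ℚ)/ℤ²) of points of 𝕋² with at least one rational
coordinate. -/
def GammaSet : Set T2 :=
  {x | (∃ q : ℚ, x.1 = ((q : ℝ) : AddCircle (1 : ℝ))) ∨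
       (∃ q : ℚ, x.2 = ((q : ℝ) : AddCircle (1 : ℝ)))}

/-! ### Part 1: integer valued continuous functions and logarithms -/

theorem const_of_int_valued {X : Type*} [TopologicalSpace X] [PreconnectedSpace X]
    {u : X → ℝ} (hu : Continuous u) (h : ∀ x, ∃ n : ℤ, u x = n) (x y : X) : u x = u y := by
  choose n hn using h
  have hc : Continuous n := by
    rw [Int.isClosedEmbedding_coe_real.isInducing.continuous_iff]
    convert hu using 1
    funext x
    simp [hn]
  have := PreconnectedSpace.constant (inferInstance : PreconnectedSpace X) hc (x := x) (y := y)
  rw [hn, hn, this]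

theorem const_of_exp_eq {X : Type*} [TopologicalSpace X] [PreconnectedSpace X]
    {u : X → ℂ} (hu : Continuous u) (h : ∀ x, Complex.exp (u x) = 1) (x y : X) : u x = u y := by
  have h2 : ∀ x, ∃ n : ℤ, u x = n * (2 * Real.pi * Complex.I) := fun x =>
    Complex.exp_eq_one_iff.1 (h x)
  have key : ∀ x, u x = ((u x).im / (2 * Real.pi) : ℝ) * (2 * Real.pi * Complex.I) := by
    intro x
    obtain ⟨n, hn⟩ := h2 x
    have : (u x).im = n * (2 * Real.pi) := by rw [hn]; simp
    rw [this, mul_div_assoc, div_self (by positivity), mul_one, hn]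
    simp
  have h3 := const_of_int_valued (u := fun x => (u x).im / (2 * Real.pi)) (by fun_prop) (by
    intro x
    obtain ⟨n, hn⟩ := h2 x
    refine ⟨n, ?_⟩
    have : (u x).im = n * (2 * Real.pi) := by rw [hn]; simp
    rw [this, mul_div_assoc, div_self (by positivity), mul_one]) x y
  rw [key x, key y, h3]

theorem const_of_exp_eq' {X : Type*} [TopologicalSpace X] [PreconnectedSpace X]
    {u v : X → ℂ} (hu : Continuous u) (hv : Continuous v)
    (h : ∀ x, Complex.exp (u x) = Complex.exp (v x)) (x y : X) : u x - v x = u y - v y :=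
  const_of_exp_eq (u := fun x => u x - v x) (by fun_prop)
    (fun x => by rw [Complex.exp_sub, h, div_self (Complex.exp_ne_zero _)]) x y

theorem exists_log {X : Type*} [TopologicalSpace X] [SimplyConnectedSpace X]
    [LocallyPathConnectedSpace X] [Nonempty X]
    {v : X → ℂ} (hv : Continuous v) (h0 : ∀ x, v x ≠ 0) :
    ∃ μ : X → ℂ, Continuous μ ∧ ∀ x, Complex.exp (μ x) = v x := by
  obtain ⟨x₀⟩ := ‹Nonempty X›
  obtain ⟨f, ⟨-, hf⟩, -⟩ := Complex.isCoveringMapOn_exp.existsUnique_continuousMap_lifts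
    ⟨v, hv⟩ (Complex.exp_log (h0 x₀)) (fun x => by simpa using h0 x)
  exact ⟨f, f.continuous, fun x => congrFun hf x⟩

/-- A continuous nonvanishing `q` which is `2πi`-periodic on a vertical line and close to `1`
has logarithms which are periodic there. -/
theorem log_periodic {μ : ℝ → ℂ} (hμ : Continuous μ) (hnear : ∀ t, ‖Complex.exp (μ t) - 1‖ < 1)
    {a b : ℝ} (hab : Complex.exp (μ a) = Complex.exp (μ b)) : μ a = μ b := by
  have hs : ∀ t, Complex.exp (μ t) ∈ Complex.slitPlane := fun t => by
    have := Complex.mem_slitPlane_of_norm_lt_one (z := Complex.exp (μ t) - 1) (hnear t)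
    simpa using this
  have h1 := const_of_exp_eq' hμ (v := fun t => Complex.log (Complex.exp (μ t)))
    (continuous_iff_continuousAt.2 fun t => ContinuousAt.clog (by fun_prop) (hs t))
    (fun t => (Complex.exp_log (Complex.exp_ne_zero _)).symm) a b
  simp only [hab] at h1
  simpa using h1

/-! ### Part 2: surjectivity of bounded perturbations of the identity of the plane -/

theorem exists_zero_of_bounded {Ψ : ℂ → ℂ} (hΨ : Continuous Ψ) {C : ℝ}
    (hC : ∀ z, ‖Ψ z - z‖ ≤ C) : ∃ z, Ψ z = 0 := by
  by_contra! h
  obtain ⟨μ, hμ, he⟩ := exists_log hΨ h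
  have hC0 : 0 ≤ C := (norm_nonneg _).trans (hC 0)
  obtain ⟨s, hs⟩ : ∃ s : ℝ, C < Real.exp s := ⟨C, by linarith [Real.add_one_le_exp C]⟩
  let p : ℝ → ℂ := fun t => s + t * Complex.I
  have hp : Continuous p := by fun_prop
  have hnorm : ∀ t, ‖Complex.exp (p t)‖ = Real.exp s := fun t => by simp [p, Complex.norm_exp]
  have hper : Complex.exp (p (2 * Real.pi)) = Complex.exp (p 0) := by
    simp [p, Complex.exp_add]
  have := log_periodic (μ := fun t => μ (Complex.exp (p t)) - p t) (by fun_prop) (by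
      intro t
      rw [Complex.exp_sub, he]
      have h1 : Ψ (Complex.exp (p t)) / Complex.exp (p t) - 1
        = (Ψ (Complex.exp (p t)) - Complex.exp (p t)) / Complex.exp (p t) := by
        field_simp [Complex.exp_ne_zero]
      rw [h1, norm_div, hnorm, div_lt_one (by positivity)]
      exact (hC _).trans_lt hs) (a := 2 * Real.pi) (b := 0) (by
      rw [Complex.exp_sub, Complex.exp_sub, he, he, hper])
  rw [hper] at this
  have h3 : p (2 * Real.pi) = p 0 := by linear_combination -this
  simp [p, Real.pi_ne_zero] at h3

/-! ### Part 3: no points of period two -/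

/-- Homeomorphisms of the plane at bounded distance from the identity. -/
def BddHomeo (G : ℂ ≃ₜ ℂ) : Prop := ∃ C : ℝ, ∀ z, ‖G z - z‖ ≤ C

theorem BddHomeo.trans {G K : ℂ ≃ₜ ℂ} (hG : BddHomeo G) (hK : BddHomeo K) :
    BddHomeo (G.trans K) := by
  obtain ⟨C, hC⟩ := hG
  obtain ⟨D, hD⟩ := hK
  refine ⟨D + C, fun z => ?_⟩
  calc ‖K (G z) - z‖ = ‖(K (G z) - G z) + (G z - z)‖ := by congr 1; ring
    _ ≤ _ := (norm_add_le _ _).trans (add_le_add (hD _) (hC _))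

theorem BddHomeo.symm {G : ℂ ≃ₜ ℂ} (hG : BddHomeo G) : BddHomeo G.symm := by
  obtain ⟨C, hC⟩ := hG
  refine ⟨C, fun z => ?_⟩
  have := hC (G.symm z)
  rw [G.apply_symm_apply] at this
  rwa [norm_sub_rev]

theorem exists_lambda {G : ℂ ≃ₜ ℂ} (hG : BddHomeo G) :
    ∃ l : ℂ × ℂ → ℂ, Continuous l ∧
      (∀ z ζ, Complex.exp (l (z, ζ)) = (G (z + Complex.exp ζ) - G z) / Complex.exp ζ) ∧
      (∀ z ζ, l (z, ζ + 2 * Real.pi * Complex.I) = l (z, ζ)) ∧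
      (∀ z ζ, l (z + Complex.exp ζ, ζ + Real.pi * Complex.I) = l (z, ζ)) := by
  have hGc := G.continuous
  obtain ⟨C, hC⟩ := hG
  obtain ⟨l, hl, he⟩ := exists_log
    (v := fun p : ℂ × ℂ => (G (p.1 + Complex.exp p.2) - G p.1) / Complex.exp p.2)
    (by
      refine Continuous.div (by fun_prop) (by fun_prop) (fun _ => Complex.exp_ne_zero _))
    (by
      intro p
      refine div_ne_zero ?_ (Complex.exp_ne_zero _)
      rw [sub_ne_zero]
      intro h
      have := G.injective h
      simp [Complex.exp_ne_zero] at this)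
  have hexp2 : ∀ ζ, Complex.exp (ζ + 2 * Real.pi * Complex.I) = Complex.exp ζ := fun ζ => by
    rw [Complex.exp_add, Complex.exp_two_pi_mul_I, mul_one]
  have hexp1 : ∀ ζ, Complex.exp (ζ + Real.pi * Complex.I) = - Complex.exp ζ := fun ζ => by
    rw [Complex.exp_add, Complex.exp_pi_mul_I]; ring
  have hper : ∀ z ζ, l (z, ζ + 2 * Real.pi * Complex.I) = l (z, ζ) := by
    have hconst := const_of_exp_eq' (u := fun p : ℂ × ℂ => l (p.1, p.2 + 2 * Real.pi * Complex.I))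
      (v := l) (by fun_prop) hl (by
        intro p
        rw [he, he]
        simp only [hexp2])
    have hC0 : 0 ≤ C := (norm_nonneg _).trans (hC 0)
    obtain ⟨s, hs⟩ : ∃ s : ℝ, 2 * C < Real.exp s :=
      ⟨2 * C, by linarith [Real.add_one_le_exp (2 * C)]⟩
    let p : ℝ → ℂ := fun t => s + t * Complex.I
    have hp : Continuous p := by fun_prop
    have hnorm : ∀ t, ‖Complex.exp (p t)‖ = Real.exp s := fun t => by simp [p, Complex.norm_exp]
    have hp2 : p (2 * Real.pi) = p 0 + 2 * Real.pi * Complex.I := by simp [p]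
    have h1 := log_periodic (μ := fun t => l (0, p t)) (by fun_prop) (by
      intro t
      rw [he]
      have h1 : (G (0 + Complex.exp (p t)) - G 0) / Complex.exp (p t) - 1
        = ((G (Complex.exp (p t)) - Complex.exp (p t)) - (G 0 - 0)) / Complex.exp (p t) := by
        field_simp [Complex.exp_ne_zero]
        simp only [zero_add, sub_zero]
        ring
      simp only
      rw [h1, norm_div, hnorm, div_lt_one (by positivity)]
      refine (norm_sub_le _ _).trans_lt ?_
      linarith [hC (Complex.exp (p t)), hC 0]) (a := 2 * Real.pi) (b := 0) (by
      rw [he, he, hp2, hexp2])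
    intro z ζ
    have := hconst (z, ζ) (0, p 0)
    simp only [← hp2] at this
    rw [h1] at this
    linear_combination this
  refine ⟨l, hl, fun z ζ => he _, hper, ?_⟩
  have hconst := const_of_exp_eq'
    (u := fun p : ℂ × ℂ => l (p.1 + Complex.exp p.2, p.2 + Real.pi * Complex.I))
      (v := l) (by fun_prop) hl (by
        intro p
        rw [he, he]
        simp only [hexp1]
        rw [show p.1 + Complex.exp p.2 + -Complex.exp p.2 = p.1 by ring]
        rw [div_neg, ← neg_div, neg_sub])
  intro z ζ
  have h1 := hconst (z, ζ) (z + Complex.exp ζ, ζ + Real.pi * Complex.I)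
  simp only [hexp1] at h1
  rw [show z + Complex.exp ζ + -Complex.exp ζ = z by ring,
    show ζ + Real.pi * Complex.I + Real.pi * Complex.I = ζ + 2 * Real.pi * Complex.I by ring,
    hper] at h1
  linear_combination (1/2) * h1

theorem no_period_two {G : ℂ ≃ₜ ℂ} (hG : BddHomeo G) (hfix : ∀ z, G z ≠ z) (x : ℂ) :
    G (G x) ≠ x := by
  intro hx
  have hGc := G.continuous
  obtain ⟨l, hl, he, hper, hsw⟩ := exists_lambda hG
  obtain ⟨μ, hμ, hm⟩ := exists_log (v := fun z => G z - z) (by fun_prop)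
    (fun z => sub_ne_zero.2 (hfix z))
  have hc := const_of_exp_eq' (u := fun z => l (z, μ z)) (v := fun z => μ (G z) - μ z)
    (by fun_prop) (by fun_prop) (by
      intro z
      rw [he, Complex.exp_sub, hm, hm]
      simp) x (G x)
  simp only [hx] at hc
  have h1 : Complex.exp (μ (G x)) = Complex.exp (μ x + Real.pi * Complex.I) := by
    rw [Complex.exp_add, Complex.exp_pi_mul_I, hm, hm, hx]; ring
  obtain ⟨n, hn⟩ := Complex.exp_eq_exp_iff_exists_int.1 h1
  have hpern : ∀ (n : ℤ) z ζ, l (z, ζ + n * (2 * Real.pi * Complex.I)) = l (z, ζ) := by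
    intro n z
    induction n using Int.induction_on with
    | zero => intro ζ; simp
    | succ k ih =>
      intro ζ
      have := hper z (ζ + k * (2 * Real.pi * Complex.I))
      rw [show l (z, ζ + (k : ℂ) * (2 * Real.pi * Complex.I)) = l (z, ζ) by simpa using ih ζ] at this
      rw [← this]
      congr 2; push_cast; ring
    | pred k ih =>
      intro ζ
      rw [← hper z, ← ih ζ]
      congr 2; push_cast; ring
  have h2 : l (G x, μ (G x)) = l (x, μ x) := by
    rw [hn, hpern, ← hsw x (μ x), hm]
    simp
  rw [h2] at hc
  have h3 : μ (G x) = μ x := by linear_combination (-1/2) * hc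
  have h4 : G (G x) - G x = G x - x := by rw [← hm, ← hm, h3]
  rw [hx] at h4
  exact hfix x (by linear_combination (-1/2) * h4)

/-! ### Part 4: moving points inside connected open sets -/

theorem exists_push (c b : ℂ) {ρ : ℝ} (hb : ‖b - c‖ < ρ) :
    ∃ φ : ℂ ≃ₜ ℂ, BddHomeo φ ∧ (∀ z, z ∉ Metric.ball c ρ → φ z = z) ∧ φ c = b := by
  have hρ : 0 < ρ := (norm_nonneg _).trans_lt hb
  let f : ℂ → ℂ := fun z => z + ((max 0 (1 - ‖z - c‖ / ρ) : ℝ) : ℂ) * (b - c)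
  let k : NNReal := ⟨‖b - c‖ / ρ, by positivity⟩
  have hk : k < 1 := by
    rw [← NNReal.coe_lt_coe]
    exact (div_lt_one hρ).2 hb
  have happ : ApproximatesLinearOn f ((ContinuousLinearEquiv.refl ℝ ℂ : ℂ ≃L[ℝ] ℂ) : ℂ →L[ℝ] ℂ)
      Set.univ k := by
    intro x _ y _
    have e1 : f x - f y - ((ContinuousLinearEquiv.refl ℝ ℂ : ℂ ≃L[ℝ] ℂ) : ℂ →L[ℝ] ℂ) (x - y)
      = (((max 0 (1 - ‖x - c‖ / ρ) - max 0 (1 - ‖y - c‖ / ρ) : ℝ)) : ℂ) * (b - c) := by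
      simp [f]; ring
    rw [e1, norm_mul, Complex.norm_real, Real.norm_eq_abs]
    have h1 : |max 0 (1 - ‖x - c‖ / ρ) - max 0 (1 - ‖y - c‖ / ρ)|
        ≤ |(1 - ‖x - c‖ / ρ) - (1 - ‖y - c‖ / ρ)| := by
      rw [max_comm 0, max_comm 0]
      exact abs_max_sub_max_le_abs _ _ _
    have h2 : |(1 - ‖x - c‖ / ρ) - (1 - ‖y - c‖ / ρ)| ≤ ‖x - y‖ / ρ := by
      have : (1 - ‖x - c‖ / ρ) - (1 - ‖y - c‖ / ρ) = (‖y - c‖ - ‖x - c‖) / ρ := by ring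
      rw [this, abs_div, abs_of_pos hρ]
      gcongr
      refine (abs_norm_sub_norm_le _ _).trans ?_
      rw [norm_sub_rev]
      simp
    calc _ ≤ ‖x - y‖ / ρ * ‖b - c‖ := by gcongr; exact h1.trans h2
      _ = (k : ℝ) * ‖x - y‖ := by
        change _ = ‖b - c‖ / ρ * ‖x - y‖
        ring
  have hN : Subsingleton ℂ ∨ k < ‖(((ContinuousLinearEquiv.refl ℝ ℂ).symm : ℂ ≃L[ℝ] ℂ) : ℂ →L[ℝ] ℂ)‖₊⁻¹ := by
    right
    have : ‖(((ContinuousLinearEquiv.refl ℝ ℂ).symm : ℂ ≃L[ℝ] ℂ) : ℂ →L[ℝ] ℂ)‖₊ = 1 := by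
      ext
      simp
    rw [this]; simpa using hk
  let φ := happ.toHomeomorph f hN
  have hφ : ∀ z, φ z = f z := fun z => rfl
  refine ⟨φ, ⟨‖b - c‖, fun z => ?_⟩, fun z hz => ?_, ?_⟩
  · rw [hφ]
    simp only [f, add_sub_cancel_left, norm_mul, Complex.norm_real, Real.norm_eq_abs]
    refine mul_le_of_le_one_left (norm_nonneg _) ?_
    rw [abs_of_nonneg (le_max_left _ _)]
    refine max_le zero_le_one ?_
    have : 0 ≤ ‖z - c‖ / ρ := by positivity
    linarith
  · rw [hφ]
    have : 1 ≤ ‖z - c‖ / ρ := by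
      rw [le_div_iff₀ hρ]
      simpa [dist_eq_norm] using hz
    simp only [f]
    rw [max_eq_left (by linarith)]
    simp
  · rw [hφ]; simp [f]

theorem exists_move {U : Set ℂ} (hU : IsOpen U) (hc : IsPreconnected U) {a b : ℂ}
    (ha : a ∈ U) (hb : b ∈ U) :
    ∃ φ : ℂ ≃ₜ ℂ, BddHomeo φ ∧ (∀ z, z ∉ U → φ z = z) ∧ φ a = b := by
  refine hc.induction₂
    (fun a b => ∃ φ : ℂ ≃ₜ ℂ, BddHomeo φ ∧ (∀ z, z ∉ U → φ z = z) ∧ φ a = b) ?_ ?_ ?_ ha hb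
  · intro x hx
    obtain ⟨ρ, hρ, hsub⟩ := Metric.isOpen_iff.1 hU x hx
    filter_upwards [mem_nhdsWithin_of_mem_nhds (Metric.ball_mem_nhds x hρ)] with y hy
    obtain ⟨φ, h1, h2, h3⟩ := exists_push x y (by simpa [dist_eq_norm] using hy)
    exact ⟨φ, h1, fun z hz => h2 z fun h => hz (hsub h), h3⟩
  · rintro x y z _ _ _ ⟨φ, h1, h2, h3⟩ ⟨ψ, k1, k2, k3⟩
    refine ⟨φ.trans ψ, h1.trans k1, fun w hw => ?_, ?_⟩
    · rw [Homeomorph.trans_apply, h2 w hw, k2 w hw]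
    · rw [Homeomorph.trans_apply, h3, k3]
  · rintro x y _ _ ⟨φ, h1, h2, h3⟩
    refine ⟨φ.symm, h1.symm, fun w hw => ?_, ?_⟩
    · rw [Homeomorph.symm_apply_eq, h2 w hw]
    · rw [Homeomorph.symm_apply_eq, h3]

/-! ### Part 5: the Brouwer lemma -/

/-- There is no periodic point of period dividing `m` for fixed point free maps. -/
def NoPer (m : ℕ) : Prop :=
  ∀ G : ℂ ≃ₜ ℂ, BddHomeo G → (∀ z, G z ≠ z) → ∀ x, G^[m] x ≠ x

theorem fpf_comp {G φ : ℂ ≃ₜ ℂ} (hfix : ∀ z, G z ≠ z) {U : Set ℂ}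
    (hfree : ∀ z ∈ U, G z ∉ U) (hφ : ∀ z, z ∉ U → φ z = z) (z : ℂ) : (G.trans φ) z ≠ z := by
  intro h
  rw [Homeomorph.trans_apply] at h
  by_cases hz : G z ∈ U
  · have : z ∈ U := by
      by_contra hzU
      have h1 : φ z = φ (G z) := by rw [h, hφ z hzU]
      have h2 := φ.injective h1
      exact hfix z h2.symm
    exact hfree z this hz
  · rw [hφ _ hz] at h
    exact hfix z h

theorem free_no_return {n : ℕ} (hn : ∀ m, 1 ≤ m → m < n → NoPer m)
    {G : ℂ ≃ₜ ℂ} (hG : BddHomeo G) (hfix : ∀ z, G z ≠ z) {U : Set ℂ} (hU : IsOpen U)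
    (hc : IsPreconnected U) (hfree : ∀ z ∈ U, G z ∉ U) :
    ∀ m, 1 ≤ m → m < n → ∀ y ∈ U, G^[m] y ∉ U := by
  intro m
  induction m using Nat.strong_induction_on with
  | _ m ih =>
    intro h1 hmn y hy hmy
    obtain ⟨φ, hφ, hid, hmv⟩ := exists_move hU hc hmy hy
    have hfp := fpf_comp hfix hfree hid
    have hit : ∀ i, i < m → (G.trans φ)^[i] y = G^[i] y := by
      intro i
      induction i with
      | zero => intro _; rfl
      | succ i ihi =>
        intro hi
        rw [Function.iterate_succ_apply', ihi (by omega), Homeomorph.trans_apply,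
          ← Function.iterate_succ_apply' G]
        exact hid _ (ih (i + 1) hi (by omega) (by omega) y hy)
    refine hn m h1 hmn (G.trans φ) (hG.trans hφ) hfp y ?_
    obtain ⟨k, rfl⟩ : ∃ k, m = k + 1 := ⟨m - 1, by omega⟩
    rw [Function.iterate_succ_apply', hit k (by omega), Homeomorph.trans_apply,
      ← Function.iterate_succ_apply' G, hmv]

theorem noPer_step {n : ℕ} (hn3 : 3 ≤ n) (hn : ∀ m, 1 ≤ m → m < n → NoPer m) : NoPer n := by
  intro G hG hfix x hper
  have hGc := G.continuous
  obtain ⟨C, hC⟩ := id hG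
  -- the critical ball
  let M : ℂ → ℝ := fun z => max ‖z - x‖ ‖G z - x‖
  have hM : Continuous M := by fun_prop
  obtain ⟨z, hz⟩ := hM.exists_forall_le (by
    refine tendsto_atTop_mono (fun z => le_max_left _ _) ?_
    have h1 := tendsto_norm_cocompact_atTop (E := ℂ)
    refine tendsto_atTop_mono (f := fun z : ℂ => ‖z‖ - ‖x‖) (fun z => norm_sub_norm_le _ _) ?_
    exact tendsto_atTop_add_const_right _ _ h1)
  set R := M z with hR
  have hzR : ‖z - x‖ ≤ R := le_max_left _ _
  have hGzR : ‖G z - x‖ ≤ R := le_max_right _ _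
  have hR0 : 0 < R := by
    by_contra h
    have h1 : z = x := by
      have : ‖z - x‖ = 0 := le_antisymm (by linarith) (norm_nonneg _)
      exact sub_eq_zero.1 (norm_eq_zero.1 this)
    have h2 : G z = x := by
      have : ‖G z - x‖ = 0 := le_antisymm (by linarith) (norm_nonneg _)
      exact sub_eq_zero.1 (norm_eq_zero.1 this)
    exact hfix z (h2.trans h1.symm)
  set B := Metric.ball x R with hB
  have memB : ∀ y, y ∈ B ↔ ‖y - x‖ < R := fun y => by rw [hB, mem_ball_iff_norm]
  have hxB : x ∈ B := Metric.mem_ball_self hR0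
  have hclB : closure B = Metric.closedBall x R := closure_ball x hR0.ne'
  have memC : ∀ y, y ∈ closure B ↔ ‖y - x‖ ≤ R := fun y => by
    rw [hclB, mem_closedBall_iff_norm]
  have hfree : ∀ y ∈ B, G y ∉ B := by
    intro y hy hy'
    have := hz y
    rw [memB] at hy hy'
    exact absurd this (not_le.2 (max_lt hy hy'))
  have hret : ∀ m, 1 ≤ m → m < n → ∀ y ∈ B, G^[m] y ∉ B :=
    free_no_return hn hG hfix Metric.isOpen_ball (convex_ball x R).isPreconnected hfree
  -- the key separation facts
  have hGm : ∀ m, Continuous G^[m] := fun m => hGc.iterate m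
  have hA : ∀ m, 1 ≤ m → m < n → ∀ y ∈ closure B, G^[m] y ∉ B := by
    intro m h1 h2 y hy hy'
    obtain ⟨w, hw1, hw2⟩ := mem_closure_iff.1 hy (G^[m] ⁻¹' B)
      (Metric.isOpen_ball.preimage (hGm m)) hy'
    exact hret m h1 h2 w hw2 hw1
  have hA' : ∀ m, 1 ≤ m → m < n → ∀ y ∈ B, G^[m] y ∉ closure B := by
    intro m h1 h2 y hy hy'
    have hop : IsOpen (G^[m] '' B) := by
      have : ∀ m, IsOpenMap G^[m] := fun m => by
        induction m with
        | zero => exact IsOpenMap.id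
        | succ m ih => rw [Function.iterate_succ]; exact ih.comp G.isOpenMap
      exact this m _ Metric.isOpen_ball
    obtain ⟨w, ⟨u, hu, rfl⟩, hw2⟩ := mem_closure_iff.1 hy' _ hop ⟨y, hy, rfl⟩
    exact hret m h1 h2 u hu hw2
  have hzC : z ∈ closure B := (memC z).2 hzR
  have hGzC : G z ∈ closure B := (memC _).2 hGzR
  have hzB : z ∉ B := fun h => hA' 1 le_rfl (by omega) z h hGzC
  have hGzB : G z ∉ B := hA 1 le_rfl (by omega) z hzC
  have hzE : ‖z - x‖ = R := le_antisymm hzR (not_lt.1 fun h => hzB ((memB z).2 h))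
  have hGzE : ‖G z - x‖ = R := le_antisymm hGzR (not_lt.1 fun h => hGzB ((memB _).2 h))
  -- segments
  let sg : ℂ → ℝ → ℂ := fun p t => x + t * (p - x)
  have hsgc : ∀ p, Continuous (sg p) := fun p => by fun_prop
  let a : Set ℂ := sg (G z) '' Set.Icc 0 1
  let b : ℝ → Set ℂ := fun τ => sg z '' Set.Icc τ 1
  have sgn : ∀ p t, 0 ≤ t → ‖sg p t - x‖ = t * ‖p - x‖ := by
    intro p t ht
    simp [sg, abs_of_nonneg ht]
  have ha : ∀ p ∈ a, p ∈ closure B ∧ (p ∈ B ∨ p = G z) := by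
    rintro p ⟨t, ⟨h0, h1⟩, rfl⟩
    rw [memC, memB, sgn _ _ h0, hGzE]
    refine ⟨by nlinarith, ?_⟩
    rcases h1.lt_or_eq with h | h
    · left; nlinarith
    · right; simp [sg, h]
  have hb : ∀ τ, 0 ≤ τ → ∀ p ∈ b τ, p ∈ closure B ∧ (p ∈ B ∨ p = z) := by
    rintro τ hτ p ⟨t, ⟨h0, h1⟩, rfl⟩
    rw [memC, memB, sgn _ _ (hτ.trans h0), hzE]
    refine ⟨by nlinarith, ?_⟩
    rcases h1.lt_or_eq with h | h
    · left; nlinarith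
    · right; simp [sg, h]
  have hacomp : IsCompact a := isCompact_Icc.image (hsgc _)
  have hbcomp : ∀ τ, IsCompact (b τ) := fun τ => isCompact_Icc.image (hsgc _)
  have haconn : IsPreconnected a := isPreconnected_Icc.image _ (hsgc _).continuousOn
  have hbconn : ∀ τ, IsPreconnected (b τ) :=
    fun τ => isPreconnected_Icc.image _ (hsgc _).continuousOn
  let γ : ℝ → Set ℂ := fun τ => a ∪ G '' (b τ)
  have hγcomp : ∀ τ, IsCompact (γ τ) := fun τ => hacomp.union ((hbcomp τ).image hGc)
  -- later orbit points are off the arc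
  have horb : ∀ i, 2 ≤ i → i < n → G^[i] x ∉ γ 0 := by
    intro i h2 hin
    obtain ⟨k, rfl⟩ : ∃ k, i = k + 1 := ⟨i - 1, by omega⟩
    have hk : G^[k] x ∉ closure B := hA' k (by omega) (by omega) x hxB
    rintro (h | ⟨p, hp, h⟩)
    · rcases (ha _ h).2 with h | h
      · exact hret (k + 1) (by omega) hin x hxB h
      · rw [Function.iterate_succ_apply'] at h
        exact hk (G.injective h ▸ hzC)
    · rw [Function.iterate_succ_apply'] at h
      exact hk (G.injective h ▸ (hb 0 le_rfl p hp).1)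
  -- neighbourhood avoiding the orbit
  let K : Set ℂ := (fun i => G^[i] x) '' (Set.Ico 2 n)
  have hKc : IsCompact K := ((Set.finite_Ico 2 n).image _).isCompact
  have hdisj : Disjoint (γ 0) K := by
    rw [Set.disjoint_left]
    rintro p hp ⟨i, hi, rfl⟩
    exact horb i hi.1 hi.2 hp
  obtain ⟨W, W', hW, hW', hγW, hKW', hWW'⟩ :=
    SeparatedNhds.of_isCompact_isCompact (hγcomp 0) hKc hdisj
  have hx1γ : G x ∈ γ 0 := Or.inr ⟨x, ⟨0, by simp, by simp [sg]⟩, rfl⟩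
  have hx2K : G (G x) ∈ K := ⟨2, ⟨le_rfl, by omega⟩, rfl⟩
  -- small ball around `G x`
  obtain ⟨η, hη, hηsub⟩ := Metric.isOpen_iff.1
    (hW.inter (hW'.preimage hGc)) (G x) ⟨hγW hx1γ, hKW' hx2K⟩
  set D := Metric.ball (G x) η with hD
  -- choose the endpoint
  obtain ⟨τ, hτ0, hτ1, hτD⟩ : ∃ τ : ℝ, 0 < τ ∧ τ < 1 ∧ G (sg z τ) ∈ D := by
    have hct : Tendsto (fun τ => G (sg z τ)) (𝓝[>] 0) (𝓝 (G x)) := by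
      have : Continuous (fun τ => G (sg z τ)) := hGc.comp (hsgc z)
      have h := this.tendsto 0
      simp only [sg, Complex.ofReal_zero, zero_mul, add_zero] at h
      exact h.mono_left nhdsWithin_le_nhds
    have h1 := hct.eventually (Metric.ball_mem_nhds (G x) hη)
    have h2 : ∀ᶠ τ : ℝ in 𝓝[>] 0, τ ∈ Set.Ioo (0 : ℝ) 1 := Ioo_mem_nhdsGT zero_lt_one
    obtain ⟨τ, h3, h4⟩ := (h1.and h2).exists
    exact ⟨τ, h4.1, h4.2, h3⟩
  -- the truncated arc is free
  have hG2z : G (G z) ∉ a := by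
    intro h
    rcases (ha _ h).2 with h | h
    · exact hA 2 (by omega) (by omega) z hzC h
    · exact hfix _ h
  have hγfree : Disjoint (γ τ) (G '' γ τ) := by
    rw [Set.disjoint_left]
    rintro p hp ⟨p', hp', rfl⟩
    rcases hp' with hp' | ⟨q, hq, rfl⟩
    · rcases hp with hp | ⟨q, hq, h⟩
      · rcases (ha _ hp').2 with h | h
        · exact hA' 1 le_rfl (by omega) p' h (ha _ hp).1
        · subst h; exact hG2z hp
      · have h := G.injective h
        subst h
        obtain ⟨t, ht, hte⟩ := hq
        obtain ⟨s, hs, hse⟩ := hp'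
        have e1 : t * ‖z - x‖ = s * ‖G z - x‖ := by
          rw [← sgn _ _ (hτ0.le.trans ht.1), ← sgn _ _ hs.1, hte, hse]
        rw [hzE, hGzE] at e1
        have e2 : t = s := mul_right_cancel₀ hR0.ne' e1
        subst e2
        have e3 : sg z t = sg (G z) t := hte.trans hse.symm
        have ht0 : (t : ℂ) ≠ 0 := by
          exact_mod_cast (hτ0.trans_le ht.1).ne'
        simp only [sg, add_right_inj] at e3
        have e4 := mul_left_cancel₀ ht0 e3
        exact hfix z (by linear_combination -e4)
    · rcases hp with hp | ⟨q', hq', h⟩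
      · rcases (hb τ hτ0.le q hq).2 with h | h
        · exact hA' 2 (by omega) (by omega) q h (ha _ hp).1
        · subst h; exact hG2z hp
      · have h := G.injective h
        subst h
        rcases (hb τ hτ0.le q hq).2 with h | h
        · exact hA' 1 le_rfl (by omega) q h (hb τ hτ0.le _ hq').1
        · subst h
          rcases (hb τ hτ0.le _ hq').2 with h | h
          · exact hGzB h
          · exact hfix _ h
  obtain ⟨V, V', hV, hV', hγV, hGV', hVV'⟩ :=
    SeparatedNhds.of_isCompact_isCompact (hγcomp τ) ((hγcomp τ).image hGc) hγfree
  -- the free connected open set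
  let O : Set ℂ := V ∩ G ⁻¹' V' ∩ W
  have hO : IsOpen O := (hV.inter (hV'.preimage hGc)).inter hW
  have hγτ0 : γ τ ⊆ γ 0 := by
    refine Set.union_subset_union_right _ (Set.image_mono (Set.image_mono ?_))
    exact Set.Icc_subset_Icc_left hτ0.le
  have hγO : γ τ ⊆ O := fun p hp =>
    ⟨⟨hγV hp, hGV' ⟨p, hp, rfl⟩⟩, hγW (hγτ0 hp)⟩
  have hxγ : x ∈ γ τ := Or.inl ⟨0, by simp, by simp [sg]⟩
  have hγconn : IsPreconnected (γ τ) := by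
    refine IsPreconnected.union (G z) ?_ ?_ haconn ((hbconn τ).image _ hGc.continuousOn)
    · exact ⟨1, by simp, by simp [sg]⟩
    · exact ⟨z, ⟨1, ⟨hτ1.le, le_rfl⟩, by simp [sg]⟩, rfl⟩
  let U : Set ℂ := connectedComponentIn O x
  have hUO : U ⊆ O := connectedComponentIn_subset _ _
  have hU : IsOpen U := hO.connectedComponentIn
  have hUc : IsPreconnected U := isPreconnected_connectedComponentIn
  have hγU : γ τ ⊆ U := hγconn.subset_connectedComponentIn hxγ hγO
  have hUfree : ∀ y ∈ U, G y ∉ U := by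
    intro y hy hy'
    exact Set.disjoint_left.1 hVV' (hUO hy').1.1 (hUO hy).1.2
  obtain ⟨φ, hφ, hφid, hφx⟩ := exists_move hU hUc (hγU hxγ)
    (hγU (Or.inr ⟨sg z τ, ⟨τ, ⟨le_rfl, hτ1.le⟩, rfl⟩, rfl⟩) : G (sg z τ) ∈ U)
  have hfix1 := fpf_comp hfix hUfree hφid
  have hDfree : ∀ y ∈ D, (G.trans φ) y ∉ D := by
    intro y hy
    have h1 : G y ∈ W' := (hηsub hy).2
    have h2 : G y ∉ U := fun h => Set.disjoint_left.1 hWW' (hUO h).2 h1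
    rw [Homeomorph.trans_apply, hφid _ h2]
    intro h3
    exact Set.disjoint_left.1 hWW' (hηsub h3).1 h1
  have hit : ∀ i, i + 1 < n → (G.trans φ)^[i] (G x) = G^[i + 1] x := by
    intro i
    induction i with
    | zero => intro _; rfl
    | succ i ihi =>
      intro hi
      rw [Function.iterate_succ_apply', ihi (by omega), Homeomorph.trans_apply,
        ← Function.iterate_succ_apply' G]
      refine hφid _ fun h => ?_
      exact Set.disjoint_left.1 hWW' (hUO h).2 (hKW' ⟨i + 1 + 1, ⟨by omega, hi⟩, rfl⟩)
  refine free_no_return hn (hG.trans hφ) hfix1 Metric.isOpen_ball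
    (convex_ball (G x) η).isPreconnected hDfree (n - 1) (by omega) (by omega) (G x)
    (Metric.mem_ball_self hη) ?_
  obtain ⟨k, rfl⟩ : ∃ k, n = k + 2 := ⟨n - 2, by omega⟩
  rw [show k + 2 - 1 = k + 1 by omega, Function.iterate_succ_apply', hit k (by omega),
    Homeomorph.trans_apply, ← Function.iterate_succ_apply' G, hper, hφx]
  exact hτD

theorem noPer (n : ℕ) (h1 : 1 ≤ n) : NoPer n := by
  induction n using Nat.strong_induction_on with
  | _ n ih =>
    rcases Nat.lt_or_ge n 3 with h | h
    · interval_cases n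
      · intro G _ hfix x; exact hfix x
      · intro G hG hfix x; exact no_period_two hG hfix x
    · exact noPer_step h (fun m hm hmn => ih m hmn hm)

/-- Brouwer's lemma: a free connected open set never returns. -/
theorem brouwer_free {G : ℂ ≃ₜ ℂ} (hG : BddHomeo G) (hfix : ∀ z, G z ≠ z) {U : Set ℂ}
    (hU : IsOpen U) (hc : IsPreconnected U) (hfree : ∀ z ∈ U, G z ∉ U)
    (m : ℕ) (hm : 1 ≤ m) (y : ℂ) (hy : y ∈ U) : G^[m] y ∉ U :=
  free_no_return (n := m + 1) (fun k hk _ => noPer k hk) hG hfix hU hc hfree m hm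
    (Nat.lt_succ_self m) y hy

theorem pr2_add (a b : R2) : pr2 (a + b) = pr2 a + pr2 b := by
  simp [pr2]

theorem pr2_sub (a b : R2) : pr2 (a - b) = pr2 a - pr2 b := by
  simp [pr2]

theorem pr2_intVec (v : ℤ × ℤ) : pr2 (intVec v) = 0 := by
  have h : ∀ n : ℤ, ((n : ℝ) : AddCircle (1 : ℝ)) = 0 := fun n =>
    (AddCircle.coe_eq_zero_iff (1 : ℝ)).2 ⟨n, by simp⟩
  simp [pr2, intVec, h]

theorem pr2_eq_zero {a : R2} (h : pr2 a = 0) : ∃ v, a = intVec v := by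
  have h1 : ((a.1 : ℝ) : AddCircle (1 : ℝ)) = 0 := congrArg Prod.fst h
  have h2 : ((a.2 : ℝ) : AddCircle (1 : ℝ)) = 0 := congrArg Prod.snd h
  obtain ⟨m, hm⟩ := (AddCircle.coe_eq_zero_iff (1 : ℝ)).1 h1
  obtain ⟨n, hn⟩ := (AddCircle.coe_eq_zero_iff (1 : ℝ)).1 h2
  refine ⟨(m, n), ?_⟩
  ext
  · simp [intVec, ← hm]
  · simp [intVec, ← hn]

theorem pr2_eq {a b : R2} (h : pr2 a = pr2 b) : ∃ v, a = b + intVec v := by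
  obtain ⟨v, hv⟩ := pr2_eq_zero (a := a - b) (by rw [pr2_sub, h, sub_self])
  exact ⟨v, by rw [← hv]; abel⟩

theorem pr2_add_int (a : R2) (v : ℤ × ℤ) : pr2 (a + intVec v) = pr2 a := by
  rw [pr2_add, pr2_intVec, add_zero]

theorem pr2_sub_int (a : R2) (v : ℤ × ℤ) : pr2 (a - intVec v) = pr2 a := by
  rw [pr2_sub, pr2_intVec, sub_zero]

theorem intVec_add (a b : ℤ × ℤ) : intVec (a + b) = intVec a + intVec b := by
  simp [intVec]

theorem intVec_neg (a : ℤ × ℤ) : intVec (-a) = -intVec a := by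
  simp [intVec]

theorem intVec_zero : intVec 0 = 0 := by
  simp [intVec]

theorem intVec_small {v : ℤ × ℤ} (h : ‖intVec v‖ < 1) : intVec v = 0 := by
  have h1 : |(v.1 : ℝ)| < 1 := (norm_fst_le (intVec v)).trans_lt h
  have h2 : |(v.2 : ℝ)| < 1 := (norm_snd_le (intVec v)).trans_lt h
  have h1' : v.1 = 0 := Int.abs_lt_one_iff.1 (by exact_mod_cast h1)
  have h2' : v.2 = 0 := Int.abs_lt_one_iff.1 (by exact_mod_cast h2)
  simp [intVec, h1', h2']

theorem pr2_open : IsOpenQuotientMap pr2 := by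
  have h : IsOpenQuotientMap (fun x : ℝ => (x : AddCircle (1 : ℝ))) :=
    QuotientAddGroup.isOpenQuotientMap_mk
  exact h.prodMap h

theorem pr2_cont : Continuous pr2 := pr2_open.continuous

theorem pr2_surj : Function.Surjective pr2 := pr2_open.surjective

theorem exists_rep (z : R2) : ∃ v, z + intVec v ∈ Set.Icc (0 : ℝ) 1 ×ˢ Set.Icc (0 : ℝ) 1 := by
  refine ⟨(-⌊z.1⌋, -⌊z.2⌋), ?_⟩
  have h1 := Int.floor_le z.1
  have h2 := Int.lt_floor_add_one z.1
  have h3 := Int.floor_le z.2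
  have h4 := Int.lt_floor_add_one z.2
  simp only [intVec, Set.mem_prod, Set.mem_Icc, Prod.fst_add, Prod.snd_add]
  push_cast
  refine ⟨⟨?_, ?_⟩, ?_, ?_⟩ <;> linarith

theorem per_bounded {E : Type*} [NormedAddCommGroup E] {u : R2 → E} (hu : Continuous u)
    (hp : ∀ z v, u (z + intVec v) = u z) : ∃ C, 0 ≤ C ∧ ∀ z, ‖u z‖ ≤ C := by
  have hK : IsCompact (Set.Icc (0 : ℝ) 1 ×ˢ Set.Icc (0 : ℝ) 1) := isCompact_Icc.prod isCompact_Icc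
  obtain ⟨C, hC⟩ := hK.exists_bound_of_continuousOn hu.continuousOn
  have : ∀ z, ‖u z‖ ≤ C := fun z => by
    obtain ⟨v, hv⟩ := exists_rep z
    rw [← hp z v]
    exact hC _ hv
  exact ⟨C, (norm_nonneg _).trans (this 0), this⟩

theorem lift_diff {A B : R2 → R2} (hA : Continuous A) (hB : Continuous B)
    (h : ∀ z, pr2 (A z) = pr2 (B z)) : ∃ v, ∀ z, A z = B z + intVec v := by
  have h' : ∀ z, ∃ v, A z - B z = intVec v := fun z => by
    obtain ⟨v, hv⟩ := pr2_eq (h z)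
    exact ⟨v, by rw [hv]; abel⟩
  obtain ⟨v, hv⟩ := h' 0
  refine ⟨v, fun z => ?_⟩
  have h1 := const_of_int_valued (u := fun z => (A z - B z).1) (by fun_prop)
    (fun x => by obtain ⟨v, hv⟩ := h' x; exact ⟨v.1, by rw [hv]; rfl⟩) z 0
  have h2 := const_of_int_valued (u := fun z => (A z - B z).2) (by fun_prop)
    (fun x => by obtain ⟨v, hv⟩ := h' x; exact ⟨v.2, by rw [hv]; rfl⟩) z 0
  have : A z - B z = intVec v := by
    rw [← hv]
    exact Prod.ext h1 h2
  rw [← this]; abel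

theorem Equivariant.disp_bdd {P : R2 → R2} (hP : Continuous P) (he : Equivariant P) :
    ∃ C, 0 ≤ C ∧ ∀ z, ‖P z - z‖ ≤ C :=
  per_bounded (u := fun z => P z - z) (by fun_prop) (fun z v => by rw [he]; abel)

theorem Equivariant.descend {P : R2 → R2} (hP : Continuous P) (he : Equivariant P) :
    ∃ p : C(T2, T2), IsLift P p := by
  let p : T2 → T2 := fun x => pr2 (P (Function.surjInv pr2_surj x))
  have hp : ∀ z, pr2 (P z) = p (pr2 z) := fun z => by
    obtain ⟨v, hv⟩ := pr2_eq (a := Function.surjInv pr2_surj (pr2 z)) (b := z)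
      (Function.surjInv_eq pr2_surj _)
    simp only [p, hv]
    rw [he, pr2_add_int]
  have hc : Continuous p := by
    rw [pr2_open.isQuotientMap.continuous_iff]
    have : p ∘ pr2 = pr2 ∘ P := by ext1 z; exact (hp z).symm
    rw [this]
    exact pr2_cont.comp hP
  exact ⟨⟨p, hc⟩, hp⟩

theorem Equivariant.comp {P Q : R2 → R2} (hP : Equivariant P) (hQ : Equivariant Q) :
    Equivariant (P ∘ Q) := fun z v => by simp [hQ z v, hP _ v]

theorem Equivariant.iterate {P : R2 → R2} (hP : Equivariant P) (n : ℕ) :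
    Equivariant (P^[n]) := by
  induction n with
  | zero => intro z v; rfl
  | succ n ih => rw [Function.iterate_succ]; exact ih.comp hP

theorem Equivariant.sub_int {P : R2 → R2} (hP : Equivariant P) (z : R2) (v : ℤ × ℤ) :
    P (z - intVec v) = P z - intVec v := by
  have := hP (z - intVec v) v
  rw [sub_add_cancel] at this
  rw [this]; abel

theorem Equivariant.inv {P Q : R2 → R2} (hP : Equivariant P) (h1 : Function.LeftInverse Q P)
    (h2 : Function.RightInverse Q P) : Equivariant Q := fun z v => by
  apply h1.injective.eq_iff.1
  rw [hP, h2, h2]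

theorem IsLift.iterate {F : R2 → R2} {f : T2 → T2} (h : IsLift F f) (n : ℕ) :
    IsLift (F^[n]) (f^[n]) := by
  induction n with
  | zero => intro z; rfl
  | succ n ih =>
    intro z
    rw [Function.iterate_succ_apply', Function.iterate_succ_apply', h, ih]

theorem IsLift.inv {F G : R2 → R2} {f g : T2 → T2} (h : IsLift F f)
    (h2 : Function.RightInverse G F) (hg : Function.LeftInverse g f) : IsLift G g := fun z => by
  have := h (G z)
  rw [h2] at this
  rw [this, hg]

/-- The fundamental-domain section. -/
def sec (x : T2) : R2 :=
  ((AddCircle.measurableEquivIoc 1 0 x.1 : ℝ), (AddCircle.measurableEquivIoc 1 0 x.2 : ℝ))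

theorem sec_meas : Measurable sec :=
  ((measurable_subtype_coe.comp (AddCircle.measurableEquivIoc 1 0).measurable).comp
    measurable_fst).prodMk ((measurable_subtype_coe.comp
      (AddCircle.measurableEquivIoc 1 0).measurable).comp measurable_snd)

theorem pr2_sec (x : T2) : pr2 (sec x) = x :=
  Prod.ext ((AddCircle.equivIoc 1 0).left_inv x.1) ((AddCircle.equivIoc 1 0).left_inv x.2)

def fundD : Set R2 := Set.Ioc (0 : ℝ) (0 + 1) ×ˢ Set.Ioc (0 : ℝ) (0 + 1)

theorem sec_mp : MeasurePreserving sec volume (volume.restrict fundD) := by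
  have h : MeasurePreserving (fun x : AddCircle (1 : ℝ) =>
      ((AddCircle.measurableEquivIoc 1 0 x : Set.Ioc (0 : ℝ) (0 + 1)) : ℝ)) volume
        (volume.restrict (Set.Ioc (0 : ℝ) (0 + 1))) :=
    (measurePreserving_subtype_coe measurableSet_Ioc).comp
      (AddCircle.measurePreserving_equivIoc 1 (a := 0))
  have := h.prod h
  rw [Measure.prod_restrict] at this
  exact this

def cellIdx (z : R2) : ℤ × ℤ := (⌈z.1⌉ - 1, ⌈z.2⌉ - 1)

theorem cellIdx_iff (z : R2) (v : ℤ × ℤ) : z + intVec v ∈ cellIdx ⁻¹' {v} ↔ z ∈ fundD := by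
  simp only [cellIdx, fundD, intVec, Set.mem_preimage, Set.mem_singleton_iff, Set.mem_prod,
    Set.mem_Ioc, Prod.ext_iff, Prod.fst_add, Prod.snd_add, Int.ceil_add_intCast, zero_add]
  have h : ∀ (x : ℝ) (n : ℤ), ⌈x⌉ + n - 1 = n ↔ 0 < x ∧ x ≤ 1 := fun x n => by
    have : ⌈x⌉ + n - 1 = n ↔ ⌈x⌉ = 1 := by constructor <;> intro h <;> omega
    rw [this, Int.ceil_eq_iff]; norm_num
  rw [h, h]

theorem cell_meas : Measurable cellIdx := by
  unfold cellIdx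
  fun_prop

theorem vol_eq_tsum {S : Set R2} (hS : MeasurableSet S) :
    ∑' v : ℤ × ℤ, volume (fundD ∩ (fun z => z + intVec v) ⁻¹' S) = volume S := by
  have h1 : ∀ v : ℤ × ℤ, volume (fundD ∩ (fun z => z + intVec v) ⁻¹' S)
      = volume (S ∩ cellIdx ⁻¹' {v}) := fun v => by
    rw [← measure_preimage_add_right volume (intVec v) (S ∩ cellIdx ⁻¹' {v})]
    congr 1
    ext z
    simp only [Set.mem_inter_iff, Set.mem_preimage]
    have := cellIdx_iff z v
    simp only [Set.mem_preimage] at this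
    rw [this, and_comm]
  simp_rw [h1]
  rw [← measure_iUnion]
  · rw [← Set.inter_iUnion, ← Set.preimage_iUnion, Set.iUnion_of_singleton, Set.preimage_univ,
      Set.inter_univ]
  · intro a b hab
    refine Set.disjoint_left.2 ?_
    rintro z ⟨-, h1⟩ ⟨-, h2⟩
    exact hab (h1.symm.trans h2)
  · exact fun v => hS.inter (cell_meas (measurableSet_singleton v))

/-- Number of lifts of a point inside `S`. -/
def cnt (S : Set R2) (x : T2) : ENNReal :=
  ∑' v : ℤ × ℤ, S.indicator 1 (sec x + intVec v)

theorem cnt_meas {S : Set R2} (hS : MeasurableSet S) : Measurable (cnt S) :=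
  Measurable.tsum fun v =>
    (measurable_one.indicator hS).comp (sec_meas.add_const (intVec v))

theorem cnt_pr2 (S : Set R2) (z : R2) : cnt S (pr2 z) = ∑' v : ℤ × ℤ, S.indicator 1 (z + intVec v) := by
  obtain ⟨u, hu⟩ := pr2_eq (pr2_sec (pr2 z))
  unfold cnt
  rw [hu, ← (Equiv.addLeft u).tsum_eq (fun v => S.indicator (1 : R2 → ENNReal) (z + intVec v))]
  congr 1
  ext v
  rw [Equiv.coe_addLeft, intVec_add, add_assoc]

theorem lintegral_cnt {S : Set R2} (hS : MeasurableSet S) : ∫⁻ x, cnt S x = volume S := by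
  unfold cnt
  rw [lintegral_tsum]
  · rw [← vol_eq_tsum hS]
    congr 1
    ext v
    have hm : Measurable (fun z : R2 => S.indicator (1 : R2 → ENNReal) (z + intVec v)) :=
      (measurable_one.indicator hS).comp (measurable_id.add_const (intVec v))
    rw [sec_mp.lintegral_comp hm]
    have : (fun z : R2 => S.indicator (1 : R2 → ENNReal) (z + intVec v))
      = ((fun z => z + intVec v) ⁻¹' S).indicator 1 := rfl
    rw [this, lintegral_indicator_one ((measurable_add_const _) hS), Measure.restrict_apply
      ((measurable_add_const _) hS), Set.inter_comm]
  · exact fun v => ((measurable_one.indicator hS).comp (sec_meas.add_const (intVec v))).aemeasurable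

theorem lift_volume {F : R2 → R2} {f : T2 → T2} (hF : Continuous F) (he : Equivariant F)
    (hl : IsLift F f) (hf : MeasurePreserving f volume volume) {S : Set R2}
    (hS : MeasurableSet S) : volume (F ⁻¹' S) = volume S := by
  rw [← lintegral_cnt hS, ← lintegral_cnt (hF.measurable hS), ← hf.lintegral_comp (cnt_meas hS)]
  congr 1
  ext x
  obtain ⟨z, rfl⟩ := pr2_surj x
  rw [← hl, cnt_pr2, cnt_pr2]
  congr 1
  ext v
  rw [← he]
  rfl

theorem brouwer_R2 {K : R2 ≃ₜ R2} {C : ℝ} (hK : ∀ z, ‖K z - z‖ ≤ C) (hfix : ∀ z, K z ≠ z)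
    {U : Set R2} (hU : IsOpen U) (hc : IsPreconnected U) (hfree : ∀ z ∈ U, K z ∉ U)
    (m : ℕ) (hm : 1 ≤ m) (y : R2) (hy : y ∈ U) : K^[m] y ∉ U := by
  let e := Complex.equivRealProdCLM
  let G : ℂ ≃ₜ ℂ := (e.toHomeomorph.trans K).trans e.symm.toHomeomorph
  have hGe : ∀ z, e (G z) = K (e z) := fun z => e.apply_symm_apply _
  have hG : BddHomeo G := by
    refine ⟨‖(e.symm : R2 →L[ℝ] ℂ)‖ * C, fun z => ?_⟩
    have : G z - z = (e.symm : R2 →L[ℝ] ℂ) (K (e z) - e z) := by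
      rw [ContinuousLinearEquiv.coe_coe, map_sub, e.symm_apply_apply]; rfl
    rw [this]
    exact (ContinuousLinearMap.le_opNorm _ _).trans
      (mul_le_mul_of_nonneg_left (hK _) (norm_nonneg _))
  have hit : ∀ (n : ℕ) z, e (G^[n] z) = K^[n] (e z) := fun n => by
    induction n with
    | zero => intro z; rfl
    | succ n ih => intro z; rw [Function.iterate_succ_apply, ih, hGe, Function.iterate_succ_apply]
  have := brouwer_free hG (U := e ⁻¹' U) (fun z h => hfix (e z) (by rw [← hGe, h]))
    (hU.preimage e.continuous) (by
      have := hc.image e.symm e.symm.continuous.continuousOn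
      rwa [ContinuousLinearEquiv.image_symm_eq_preimage] at this)
    (fun z hz h => hfree (e z) hz (by rw [← hGe]; exact h)) m hm (e.symm y)
    (by simpa using hy)
  intro h
  apply this
  rw [Set.mem_preimage, hit, e.apply_symm_apply]
  exact h

theorem vol_ball_R2 (x : R2) (r : ℝ) :
    volume (Metric.ball x r) = ENNReal.ofReal (2 * r) * ENNReal.ofReal (2 * r) := by
  rw [← ball_prod_same, Measure.volume_eq_prod, Measure.prod_prod, Real.volume_ball,
    Real.volume_ball]

theorem area_lemma {K : R2 ≃ₜ R2} {C : ℝ} (hK : ∀ z, ‖K z - z‖ ≤ C)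
    (hv : ∀ S, MeasurableSet S → volume (K ⁻¹' S) = volume S)
    {H : R2 → R2} {κ : ℝ} (hH : ∀ z, ‖H z - z‖ ≤ κ) {δ : R2} (hδ : δ ≠ 0) (hδ1 : ‖δ‖ ≤ 1)
    (hHK : ∀ z, H (K z) = H z + δ) {x : R2} {ρ : ℝ} (hρ : 0 < ρ) (hρκ : ρ ≤ 2 * κ + 1)
    (hfree : ∀ z ∈ Metric.ball x ρ, K z ∉ Metric.ball x ρ) :
    ρ ^ 2 ≤ (4 * κ + 3) ^ 2 * ‖δ‖ := by
  have hδ0 : 0 < ‖δ‖ := norm_pos_iff.2 hδ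
  have hκ : 0 ≤ κ := (norm_nonneg _).trans (hH 0)
  have hfix : ∀ z, K z ≠ z := fun z h => by
    have := hHK z
    rw [h] at this
    exact hδ (by simpa using this.symm)
  have hHit : ∀ (i : ℕ) z, H (K^[i] z) = H z + (i : ℝ) • δ := fun i => by
    induction i with
    | zero => intro z; simp
    | succ i ih =>
      intro z
      rw [Function.iterate_succ_apply', hHK, ih, Nat.cast_succ, add_smul, one_smul, add_assoc]
  let N := ⌈1 / ‖δ‖⌉₊
  let A : ℕ → Set R2 := fun i => K^[i] ⁻¹' Metric.ball x ρ
  have hAm : ∀ i, MeasurableSet (A i) := fun i =>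
    (K.continuous.iterate i).measurable measurableSet_ball
  have hAv : ∀ i, volume (A i) = volume (Metric.ball x ρ) := fun i => by
    induction i with
    | zero => rfl
    | succ i ih =>
      rw [← ih, ← hv _ (hAm i)]
      rfl
  have hdis : ∀ i j, i < j → Disjoint (A i) (A j) := fun i j hij => by
    refine Set.disjoint_left.2 fun y hi hj => ?_
    refine brouwer_R2 hK hfix Metric.isOpen_ball
      (convex_ball x ρ).isPreconnected hfree (j - i) (by omega) (K^[i] y) hi ?_
    rw [← Function.iterate_add_apply, Nat.sub_add_cancel hij.le]
    exact hj
  have hsub : ∀ i < N, A i ⊆ Metric.ball x (4 * κ + 3) := fun i hi y hy => by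
    have h1 : (i : ℝ) * ‖δ‖ ≤ 1 := by
      have := Nat.lt_ceil.1 hi
      rw [lt_div_iff₀ hδ0] at this
      exact this.le
    have h2 : ‖K^[i] y - x‖ < ρ := by simpa [A, dist_eq_norm] using hy
    have e : y - x = (K^[i] y - x) + (H (K^[i] y) - K^[i] y) - (H y - y) - (i : ℝ) • δ := by
      rw [hHit]; abel
    rw [Metric.mem_ball, dist_eq_norm, e]
    have h3 := hH (K^[i] y)
    have h4 := hH y
    have h5 : ‖(i : ℝ) • δ‖ ≤ 1 := by rw [norm_smul]; simpa using h1
    have h6 := norm_sub_le ((K^[i] y - x) + (H (K^[i] y) - K^[i] y) - (H y - y)) ((i : ℝ) • δ)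
    have h7 := norm_sub_le ((K^[i] y - x) + (H (K^[i] y) - K^[i] y)) (H y - y)
    have h8 := norm_add_le (K^[i] y - x) (H (K^[i] y) - K^[i] y)
    linarith
  have hsum : (N : ENNReal) * volume (Metric.ball x ρ) ≤ volume (Metric.ball x (4 * κ + 3)) := by
    calc (N : ENNReal) * volume (Metric.ball x ρ)
        = ∑ i ∈ Finset.range N, volume (A i) := by simp [hAv]
      _ = volume (⋃ i ∈ Finset.range N, A i) := by
          rw [measure_biUnion_finset _ (fun i _ => hAm i)]
          intro i _ j _ hij
          rcases lt_or_gt_of_ne hij with h | h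
          · exact hdis i j h
          · exact (hdis j i h).symm
      _ ≤ _ := measure_mono (Set.iUnion₂_subset fun i hi => hsub i (Finset.mem_range.1 hi))
  rw [vol_ball_R2, vol_ball_R2, ← ENNReal.ofReal_natCast, ← ENNReal.ofReal_mul (by positivity),
    ← ENNReal.ofReal_mul (by positivity), ← ENNReal.ofReal_mul (by positivity),
    ENNReal.ofReal_le_ofReal_iff (by positivity)] at hsum
  have hN : 1 / ‖δ‖ ≤ N := Nat.le_ceil _
  have h9 : 1 / ‖δ‖ * ρ ^ 2 ≤ (4 * κ + 3) ^ 2 := by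
    have := mul_le_mul_of_nonneg_right hN (sq_nonneg ρ)
    nlinarith
  rw [div_mul_eq_mul_div, one_mul, div_le_iff₀ hδ0] at h9
  exact h9

theorem rigid_lemma {K : R2 ≃ₜ R2} {C : ℝ} (hK : ∀ z, ‖K z - z‖ ≤ C)
    (hv : ∀ S, MeasurableSet S → volume (K ⁻¹' S) = volume S)
    {H : R2 → R2} {κ : ℝ} (hH : ∀ z, ‖H z - z‖ ≤ κ) {δ : R2} (hδ : δ ≠ 0) (hδ1 : ‖δ‖ ≤ 1)
    (hHK : ∀ z, H (K z) = H z + δ) {L : ℝ} (hL : 0 ≤ L)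
    (hLip : ∀ z w, ‖K z - K w‖ ≤ L * ‖z - w‖) (x : R2) :
    ‖K x - x‖ ≤ (1 + L) * (4 * κ + 3) * √‖δ‖ := by
  have hκ : 0 ≤ κ := (norm_nonneg _).trans (hH 0)
  rcases eq_or_lt_of_le (norm_nonneg (K x - x)) with h0 | h0
  · rw [← h0]; positivity
  set ε := ‖K x - x‖ with hε
  have hε2 : ε ≤ 2 * κ + 1 := by
    have e : K x - x = - (H (K x) - K x) + (H x - x) + δ := by rw [hHK]; abel
    rw [hε, e]
    have h1 := norm_add_le (- (H (K x) - K x) + (H x - x)) δ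
    have h2 := norm_add_le (- (H (K x) - K x)) (H x - x)
    rw [norm_neg] at h2
    linarith [hH (K x), hH x]
  have hL1 : 0 < 1 + L := by linarith
  have := area_lemma hK hv hH hδ hδ1 hHK (x := x) (ρ := ε / (1 + L)) (by positivity)
    ((div_le_self h0.le (by linarith)).trans hε2) (by
      intro z hz hKz
      rw [Metric.mem_ball, dist_eq_norm] at hz hKz
      have h1 := hLip x z
      have h2 : ε ≤ ‖K x - K z‖ + ‖K z - x‖ := by
        rw [hε]; exact norm_sub_le_norm_sub_add_norm_sub _ _ _
      have h3 : ‖x - z‖ < ε / (1 + L) := by rwa [norm_sub_rev]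
      have h4 : L * ‖x - z‖ ≤ L * (ε / (1 + L)) := mul_le_mul_of_nonneg_left h3.le hL
      have h5 : L * (ε / (1 + L)) + ε / (1 + L) = ε := by field_simp; ring
      linarith)
  rw [div_pow, div_le_iff₀ (by positivity)] at this
  have h6 : ε ^ 2 ≤ ((1 + L) * (4 * κ + 3) * √‖δ‖) ^ 2 := by
    rw [mul_pow, mul_pow, Real.sq_sqrt (norm_nonneg _)]
    linarith
  exact le_of_sq_le_sq h6 (by positivity)

/-- Normalised data attached to the theorem. -/
structure Setup (r : ℕ∞) (f : T2 → T2) (ω : R2) where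
  F : R2 → R2
  Fi : R2 → R2
  H : R2 → R2
  κ : ℝ
  L : ℝ
  li : Function.LeftInverse Fi F
  ri : Function.RightInverse Fi F
  cF : ContDiff ℝ r F
  cFi : ContDiff ℝ r Fi
  eF : Equivariant F
  lF : IsLift F f
  cH : Continuous H
  eH : Equivariant H
  hHF : ∀ z, H (F z) = H z + ω
  hκ : ∀ z, ‖H z - z‖ ≤ κ
  hL1 : 1 ≤ L
  hLF : ∀ z w, ‖F z - F w‖ ≤ L * ‖z - w‖
  hLFi : ∀ z w, ‖Fi z - Fi w‖ ≤ L * ‖z - w‖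
  mp : MeasurePreserving f (volume : Measure T2) volume
  hti : TotallyIrrationalVec ω
  hsl : SuperLiouville ω

theorem fderiv_per {P : R2 → R2} (he : Equivariant P) (z : R2) (v : ℤ × ℤ) :
    fderiv ℝ P (z + intVec v) = fderiv ℝ P z := by
  rw [← fderiv_comp_add_right]
  have : (fun x => P (x + intVec v)) = fun x => P x + intVec v := by ext1 x; exact he x v
  rw [this, fderiv_add_const]

theorem lip_of_equivariant {P : R2 → R2} (hP : ContDiff ℝ 1 P) (he : Equivariant P) :
    ∃ L : ℝ, 0 ≤ L ∧ ∀ z w, ‖P z - P w‖ ≤ L * ‖z - w‖ := by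
  obtain ⟨C, hC0, hC⟩ := per_bounded (hP.continuous_fderiv one_ne_zero) (fderiv_per he)
  refine ⟨C, hC0, fun z w => ?_⟩
  exact convex_univ.norm_image_sub_le_of_norm_fderiv_le
    (fun x _ => hP.differentiable one_ne_zero x) (fun x _ => hC x) (Set.mem_univ w) (Set.mem_univ z)

theorem exists_setup {r : ℕ∞} (hr : 2 ≤ r) {f : T2 → T2} {ω : R2} {w : T2} (hw : pr2 ω = w)
    (hti : TotallyIrrationalVec ω) (hsl : SuperLiouville ω) (hiso : IsotopicToId f)
    (hcr : IsCrDiffeo r f) (hmp : MeasurePreserving f (volume : Measure T2) volume)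
    {h : T2 → T2} {H : R2 → R2} (hH : Continuous H) (hl : IsLift H h) (he : Equivariant H)
    (hc : ∀ x : T2, h (f x) = h x + w) :
    ∃ S : Setup r f ω, S.H = H := by
  obtain ⟨F, G, lF, h1, h2, cF, cG⟩ := hcr
  obtain ⟨-, E, hE, lE, eE⟩ := hiso
  obtain ⟨u, hu⟩ := lift_diff cF.continuous hE.continuous (fun z => by rw [lF, lE])
  have eF : Equivariant F := fun z v => by rw [hu, hu, eE]; abel
  obtain ⟨v, hv⟩ := lift_diff (A := fun z => H (F z)) (B := fun z => H z + ω)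
    (hH.comp cF.continuous) (hH.add continuous_const)
    (fun z => by rw [hl, lF, hc, pr2_add, hl, hw])
  have hr1 : ((1 : ℕ∞) : WithTop ℕ∞) ≤ r := by
    exact_mod_cast (one_le_two.trans hr)
  let F' : R2 → R2 := fun z => F z - intVec v
  let G' : R2 → R2 := fun z => G (z + intVec v)
  have li : Function.LeftInverse G' F' := fun z => by simp [G', F', h1 z]
  have ri : Function.RightInverse G' F' := fun z => by simp [G', F', h2 (z + intVec v)]
  have cF' : ContDiff ℝ r F' := cF.sub contDiff_const
  have cG' : ContDiff ℝ r G' := cG.comp (contDiff_id.add contDiff_const)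
  have eF' : Equivariant F' := fun z v => by simp only [F', eF z v]; abel
  have eG' : Equivariant G' := eF'.inv li ri
  obtain ⟨κ, -, hκ⟩ := he.disp_bdd hH
  obtain ⟨L1, hL1, hLF⟩ := lip_of_equivariant (cF'.of_le hr1) eF'
  obtain ⟨L2, hL2, hLG⟩ := lip_of_equivariant (cG'.of_le hr1) eG'
  refine ⟨{ F := F', Fi := G', H := H, κ := κ, L := 1 + L1 + L2, li := li, ri := ri, cF := cF',
            cFi := cG', eF := eF', lF := fun z => by simp only [F', pr2_sub_int, lF z],
            cH := hH, eH := he, hHF := fun z => ?_, hκ := hκ, hL1 := by linarith,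
            hLF := fun z w => (hLF z w).trans
              (mul_le_mul_of_nonneg_right (by linarith) (norm_nonneg _)),
            hLFi := fun z w => (hLG z w).trans
              (mul_le_mul_of_nonneg_right (by linarith) (norm_nonneg _)),
            mp := hmp, hti := hti, hsl := hsl }, rfl⟩
  simp only [F']
  rw [he.sub_int, hv]
  abel

namespace Setup

variable {r : ℕ∞} {f : T2 → T2} {ω : R2} (S : Setup r f ω)

theorem eFi : Equivariant S.Fi := S.eF.inv S.li S.ri

theorem hHit (n : ℕ) (z : R2) : S.H (S.F^[n] z) = S.H z + (n : ℝ) • ω := by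
  induction n with
  | zero => simp
  | succ n ih =>
    rw [Function.iterate_succ_apply', S.hHF, ih, Nat.cast_succ, add_smul, one_smul, add_assoc]

/-- The homeomorphism `F^n - v`. -/
def G (n : ℕ) (v : ℤ × ℤ) : R2 ≃ₜ R2 where
  toFun z := S.F^[n] z - intVec v
  invFun z := S.Fi^[n] (z + intVec v)
  left_inv z := by
    show S.Fi^[n] (S.F^[n] z - intVec v + intVec v) = z
    rw [sub_add_cancel]; exact (S.li.iterate n) z
  right_inv z := by
    show S.F^[n] (S.Fi^[n] (z + intVec v)) - intVec v = z
    rw [(S.ri.iterate n) (z + intVec v)]; abel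
  continuous_toFun := (S.cF.continuous.iterate n).sub continuous_const
  continuous_invFun := (S.cFi.continuous.iterate n).comp (continuous_id.add continuous_const)

theorem G_apply (n v z) : S.G n v z = S.F^[n] z - intVec v := rfl

theorem G_equiv (n v) : Equivariant (S.G n v) := fun z u => by
  rw [G_apply, G_apply, S.eF.iterate n]; abel

theorem G_lift (n v) : IsLift (S.G n v) (f^[n]) := fun z => by
  rw [G_apply, pr2_sub_int, S.lF.iterate n]

theorem G_vol (n v) (A : Set R2) (hA : MeasurableSet A) : volume (S.G n v ⁻¹' A) = volume A :=
  lift_volume (S.G n v).continuous (S.G_equiv n v) (S.G_lift n v) (S.mp.iterate n) hA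

theorem G_H (n v z) : S.H (S.G n v z) = S.H z + ((n : ℝ) • ω - intVec v) := by
  rw [G_apply, S.eH.sub_int, S.hHit]; abel

theorem lip_it (n : ℕ) (z w : R2) : ‖S.F^[n] z - S.F^[n] w‖ ≤ S.L ^ n * ‖z - w‖ := by
  induction n with
  | zero => simp
  | succ n ih =>
    rw [Function.iterate_succ_apply', Function.iterate_succ_apply', pow_succ']
    refine (S.hLF _ _).trans ?_
    rw [mul_assoc]
    exact mul_le_mul_of_nonneg_left ih (by linarith [S.hL1])

theorem delta_ne (S : Setup r f ω) {n : ℕ} (hn : 1 ≤ n) (v : ℤ × ℤ) : (n : ℝ) • ω - intVec v ≠ 0 := fun h => by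
  have h1 : (n : ℝ) * ω.1 - v.1 = 0 := congrArg Prod.fst h
  have := (S.hti n 0 (-v.1) (by push_cast; linarith)).1
  omega

theorem liouville (S : Setup r f ω) {B : ℝ} (hB : 1 < B) :
    ∃ᶠ n : ℕ in atTop, 1 ≤ n ∧ ∃ v, ‖(n : ℝ) • ω - intVec v‖ * B ^ n ≤ 1 := by
  have hlB : 0 < Real.log B := Real.log_pos hB
  refine (S.hsl (-Real.log B)).mono fun n hn => ?_
  have hn1 : 1 ≤ n := by
    by_contra h
    have : n = 0 := by omega
    subst this
    simp at hn
    linarith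
  refine ⟨hn1, ?_⟩
  have hn0 : (0 : ℝ) < n := by exact_mod_cast hn1
  set x := normT2 ((n : ℝ) • ω) with hx
  have hlx : Real.log x < - (n * Real.log B) := by
    rw [inv_mul_lt_iff₀ hn0] at hn
    linarith
  have hx0 : 0 ≤ x := Real.iInf_nonneg fun v => Real.sqrt_nonneg _
  have hxp : 0 < x := by
    rcases hx0.eq_or_lt with h | h
    · rw [← h, Real.log_zero] at hlx
      nlinarith
    · exact h
  have hxB : x < (B ^ n)⁻¹ := by
    rw [← Real.log_lt_log_iff hxp (by positivity), Real.log_inv, Real.log_pow]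
    exact hlx
  obtain ⟨v, hv⟩ := exists_lt_of_ciInf_lt hxB
  refine ⟨v, ?_⟩
  have : ‖(n : ℝ) • ω - intVec v‖ ≤ enorm2 ((n : ℝ) • ω - intVec v) := by
    unfold enorm2
    rw [Prod.norm_def]
    refine max_le ?_ ?_
    · exact Real.abs_le_sqrt (by nlinarith)
    · exact Real.abs_le_sqrt (by nlinarith)
  have h2 := this.trans hv.le
  rwa [le_inv_comm₀ (lt_of_lt_of_le (norm_pos_iff.2 (S.delta_ne hn1 v)) le_rfl) (by positivity),
    le_inv_comm₀ (by positivity) (norm_pos_iff.2 (S.delta_ne hn1 v)), ← one_div,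
    le_div_iff₀ (by positivity)] at h2

theorem κ0 : 0 ≤ S.κ := (norm_nonneg _).trans (S.hκ 0)

theorem rigid {A : ℝ} (hA : 1 ≤ A) :
    ∃ᶠ n : ℕ in atTop, 1 ≤ n ∧ ∃ v, ‖(n : ℝ) • ω - intVec v‖ * A ^ n ≤ 1 ∧
      ∀ z, ‖S.F^[n] z - intVec v - z‖ * A ^ n ≤ 1 := by
  have hL := S.hL1
  have hκ := S.κ0
  set c := 2 * S.L * (4 * S.κ + 3) * A with hc
  have hLκ : 1 ≤ S.L * (4 * S.κ + 3) := by nlinarith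
  have hcA : A ≤ c := by nlinarith
  have hc2 : 1 < c := by nlinarith
  have hcc : c ≤ c ^ 2 := by nlinarith
  refine (S.liouville (B := c ^ 2) (by nlinarith)).mono ?_
  rintro n ⟨hn, v, hv⟩
  refine ⟨hn, v, ?_, ?_⟩
  · refine le_trans (mul_le_mul_of_nonneg_left ?_ (norm_nonneg _)) hv
    exact pow_le_pow_left₀ (by linarith) (hcA.trans hcc) n
  intro z
  set δ := (n : ℝ) • ω - intVec v with hδ
  have hδ1 : ‖δ‖ ≤ 1 := by
    have : 1 ≤ (c ^ 2) ^ n := one_le_pow₀ (by nlinarith)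
    nlinarith [norm_nonneg δ]
  obtain ⟨C, -, hC⟩ := (S.G_equiv n v).disp_bdd (S.G n v).continuous
  have hLn : 1 ≤ S.L ^ n := one_le_pow₀ hL
  have h1 := rigid_lemma hC (S.G_vol n v) S.hκ (S.delta_ne hn v) hδ1 (S.G_H n v)
    (L := S.L ^ n) (by positivity) (fun z w => by
      rw [G_apply, G_apply, sub_sub_sub_cancel_right]; exact S.lip_it n z w) z
  rw [G_apply] at h1
  have h2 : (1 + S.L ^ n) * (4 * S.κ + 3) * A ^ n ≤ c ^ n := by
    have e : c ^ n = 2 ^ n * S.L ^ n * (4 * S.κ + 3) ^ n * A ^ n := by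
      rw [hc, mul_pow, mul_pow, mul_pow]
    rw [e]
    have h3 : (2 : ℝ) ≤ 2 ^ n := by
      calc (2 : ℝ) = 2 ^ 1 := by norm_num
        _ ≤ 2 ^ n := pow_le_pow_right₀ (by norm_num) hn
    have h4 : 4 * S.κ + 3 ≤ (4 * S.κ + 3) ^ n := le_self_pow₀ (by linarith) (by omega)
    have h5 : 1 + S.L ^ n ≤ 2 ^ n * S.L ^ n := by nlinarith
    gcongr
  have h6 : c ^ n * √‖δ‖ ≤ 1 := by
    have : (c ^ n * √‖δ‖) ^ 2 ≤ 1 := by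
      rw [mul_pow, Real.sq_sqrt (norm_nonneg _), ← pow_mul, mul_comm n 2, pow_mul]
      linarith
    nlinarith [show 0 ≤ c ^ n * √‖δ‖ by positivity]
  calc ‖S.F^[n] z - intVec v - z‖ * A ^ n
      ≤ ((1 + S.L ^ n) * (4 * S.κ + 3) * √‖δ‖) * A ^ n := by gcongr
    _ = ((1 + S.L ^ n) * (4 * S.κ + 3) * A ^ n) * √‖δ‖ := by ring
    _ ≤ c ^ n * √‖δ‖ := by gcongr
    _ ≤ 1 := h6

end Setup

theorem locfin_Icc : LocallyFinite (fun n : ℤ => Set.Icc (n : ℝ) (n + 1)) := by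
  intro t
  refine ⟨Set.Ioo (t - 1) (t + 1), Ioo_mem_nhds (by linarith) (by linarith), ?_⟩
  refine (Set.finite_Icc (⌊t⌋ - 3) (⌊t⌋ + 3)).subset ?_
  rintro n ⟨s, ⟨h1, h2⟩, h3, h4⟩
  have h5 := Int.floor_le t
  have h6 := Int.lt_floor_add_one t
  have a : ((⌊t⌋ - 3 : ℤ) : ℝ) ≤ n := by push_cast; linarith
  have b : (n : ℝ) ≤ ((⌊t⌋ + 3 : ℤ) : ℝ) := by push_cast; linarith
  exact ⟨by exact_mod_cast a, by exact_mod_cast b⟩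

theorem exists_path {K : R2 ≃ₜ R2} {H : R2 → R2} {κ : ℝ} (hH : ∀ z, ‖H z - z‖ ≤ κ) {δ : R2}
    (hHK : ∀ z, H (K z) = H z + δ) {ut : R2 → ℝ} (hu : ∀ z, ut (K z) = ut z)
    {V : Set R2} (hV : Convex ℝ V) {x : R2} (hx : x ∈ V) (hKx : K x ∈ V) :
    ∃ α : ℝ → R2, Continuous α ∧ (∃ C, ∀ t, ‖α t - t • δ‖ ≤ C) ∧ ∀ t, ∃ y ∈ V, ut (α t) = ut y := by
  let β : ℝ → R2 := fun s => x + s • (K x - x)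
  have hβ : Continuous β := by fun_prop
  have hβV : ∀ s, 0 ≤ s → s ≤ 1 → β s ∈ V := fun s h0 h1 =>
    hV.add_smul_sub_mem hx hKx ⟨h0, h1⟩
  let α : ℝ → R2 := fun t => (K ^ ⌊t⌋) (β (Int.fract t))
  have hz1 : ∀ (n : ℤ) z, (K ^ (n + 1)) z = (K ^ n) (K z) := fun n z => by
    rw [zpow_add_one]; rfl
  have hz2 : ∀ (n : ℤ) z, (K ^ (n - 1)) z = (K ^ n) (K.symm z) := fun n z => by
    rw [zpow_sub_one]; rfl
  have hHi : ∀ z, H (K.symm z) = H z - δ := fun z => by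
    have := hHK (K.symm z)
    rw [K.apply_symm_apply] at this
    rw [this]; abel
  have hui : ∀ z, ut (K.symm z) = ut z := fun z => by
    have := hu (K.symm z)
    rw [K.apply_symm_apply] at this
    exact this.symm
  have hHn : ∀ (n : ℤ) z, H ((K ^ n) z) = H z + (n : ℝ) • δ := fun n => by
    induction n using Int.induction_on with
    | zero => intro z; simp
    | succ n ih => intro z; rw [hz1, ih, hHK]; push_cast; rw [add_smul, one_smul]; abel
    | pred n ih => intro z; rw [hz2, ih, hHi]; push_cast; rw [sub_smul, one_smul]; abel
  have hun : ∀ (n : ℤ) z, ut ((K ^ n) z) = ut z := fun n => by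
    induction n using Int.induction_on with
    | zero => intro z; simp
    | succ n ih => intro z; rw [hz1, ih, hu]
    | pred n ih => intro z; rw [hz2, ih, hui]
  have hαn : ∀ (n : ℤ), Set.EqOn α (fun t => (K ^ n) (β (t - n))) (Set.Icc (n : ℝ) (n + 1)) := by
    rintro n t ⟨h1, h2⟩
    rcases h2.lt_or_eq with h | h
    · have : ⌊t⌋ = n := Int.floor_eq_iff.2 ⟨h1, h⟩
      simp only [α, Int.fract, this]
    · have : ⌊t⌋ = n + 1 := by rw [h]; simp
      simp only [α, Int.fract, this]
      rw [h, hz1]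
      simp [β]
  refine ⟨α, ?_, ?_, ?_⟩
  · refine locfin_Icc.continuous ?_ (fun n => isClosed_Icc) (fun n => ?_)
    · refine Set.eq_univ_of_forall fun t => Set.mem_iUnion.2 ⟨⌊t⌋, Int.floor_le t, ?_⟩
      exact (Int.lt_floor_add_one t).le
    · refine ContinuousOn.congr ?_ (hαn n)
      exact ((K ^ n).continuous.comp (hβ.comp (continuous_id.sub continuous_const))).continuousOn
  · refine ⟨κ + κ + (‖x‖ + ‖K x - x‖) + ‖δ‖, fun t => ?_⟩
    set s := Int.fract t with hs
    have hs0 : 0 ≤ s := Int.fract_nonneg t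
    have hs1 : s ≤ 1 := (Int.fract_lt_one t).le
    have ht : t = ⌊t⌋ + s := (Int.floor_add_fract t).symm
    have e : α t - t • δ = -(H (α t) - α t) + (H (β s) - β s) + β s - s • δ := by
      have : H (α t) = H (β s) + (⌊t⌋ : ℝ) • δ := hHn _ _
      rw [this]
      nth_rewrite 2 [ht]
      rw [add_smul]; abel
    rw [e]
    have n1 := norm_sub_le (-(H (α t) - α t) + (H (β s) - β s) + β s) (s • δ)
    have n2 := norm_add_le (-(H (α t) - α t) + (H (β s) - β s)) (β s)
    have n3 := norm_add_le (-(H (α t) - α t)) (H (β s) - β s)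
    have n4 : ‖β s‖ ≤ ‖x‖ + ‖K x - x‖ := by
      refine (norm_add_le _ _).trans ?_
      rw [norm_smul, Real.norm_of_nonneg hs0]
      nlinarith [norm_nonneg (K x - x)]
    have n5 : ‖s • δ‖ ≤ ‖δ‖ := by
      rw [norm_smul, Real.norm_of_nonneg hs0]
      nlinarith [norm_nonneg δ]
    rw [norm_neg] at n3
    linarith [hH (α t), hH (β s)]
  · intro t
    exact ⟨_, hβV _ (Int.fract_nonneg t) (Int.fract_lt_one t).le, hun _ _⟩

theorem paths_cross {α β : ℝ → R2} (hα : Continuous α) (hβ : Continuous β) {δ δ' : R2} {C C' : ℝ}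
    (h1 : ∀ t, ‖α t - t • δ‖ ≤ C) (h2 : ∀ t, ‖β t - t • δ'‖ ≤ C')
    (hd : δ.1 * δ'.2 - δ.2 * δ'.1 ≠ 0) : ∃ s t, α s = β t := by
  set d := δ.1 * δ'.2 - δ.2 * δ'.1 with hdd
  let M : R2 → ℂ := fun p => ⟨(p.1 * δ'.2 - p.2 * δ'.1) / d, (p.1 * δ.2 - p.2 * δ.1) / d⟩
  have hM : Continuous M := by
    have e : M = fun p => Complex.equivRealProdCLM.symm
      ((p.1 * δ'.2 - p.2 * δ'.1) / d, (p.1 * δ.2 - p.2 * δ.1) / d) := by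
      ext1 p
      apply Complex.ext <;> simp [M]
    rw [e]
    refine Complex.equivRealProdCLM.symm.continuous.comp ?_
    fun_prop
  let Ψ : ℂ → ℂ := fun z => M (α z.re - β z.im)
  have hΨ : Continuous Ψ := hM.comp
    ((hα.comp Complex.continuous_re).sub (hβ.comp Complex.continuous_im))
  have hMb : ∀ p, ‖M p‖ ≤ ‖p‖ * ((|δ'.2| + |δ'.1|) / |d| + (|δ.2| + |δ.1|) / |d|) := fun p => by
    have hp1 : |p.1| ≤ ‖p‖ := norm_fst_le p
    have hp2 : |p.2| ≤ ‖p‖ := norm_snd_le p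
    have key : ∀ a b : ℝ, |(p.1 * a - p.2 * b) / d| ≤ ‖p‖ * ((|a| + |b|) / |d|) := fun a b => by
      rw [abs_div, ← mul_div_assoc]
      gcongr
      refine (abs_sub _ _).trans ?_
      rw [abs_mul, abs_mul, mul_add]
      gcongr
    refine (Complex.norm_le_abs_re_add_abs_im _).trans ?_
    rw [mul_add]
    exact add_le_add (key _ _) (key _ _)
  have hΨz : ∀ z, Ψ z - z = M ((α z.re - z.re • δ) - (β z.im - z.im • δ')) := fun z => by
    apply Complex.ext
    · simp only [Ψ, M, Complex.sub_re, Prod.fst_sub, Prod.snd_sub, Prod.smul_fst, Prod.smul_snd,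
        smul_eq_mul]
      field_simp
      rw [hdd]; ring
    · simp only [Ψ, M, Complex.sub_im, Prod.fst_sub, Prod.snd_sub, Prod.smul_fst, Prod.smul_snd,
        smul_eq_mul]
      field_simp
      rw [hdd]; ring
  obtain ⟨z, hz⟩ := exists_zero_of_bounded hΨ
    (C := (C + C') * ((|δ'.2| + |δ'.1|) / |d| + (|δ.2| + |δ.1|) / |d|)) (fun z => by
      rw [hΨz]
      refine (hMb _).trans ?_
      gcongr
      exact (norm_sub_le _ _).trans (add_le_add (h1 _) (h2 _)))
  refine ⟨z.re, z.im, ?_⟩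
  set p := α z.re - β z.im with hp
  have e1 : (p.1 * δ'.2 - p.2 * δ'.1) / d = 0 := congrArg Complex.re hz
  have e2 : (p.1 * δ.2 - p.2 * δ.1) / d = 0 := congrArg Complex.im hz
  rw [div_eq_zero_iff, or_iff_left hd] at e1 e2
  have e3 : p.1 * d = 0 := by rw [hdd]; linear_combination δ.1 * e1 - δ'.1 * e2
  have e4 : p.2 * d = 0 := by rw [hdd]; linear_combination δ.2 * e1 - δ'.2 * e2
  rw [mul_eq_zero, or_iff_left hd] at e3 e4
  exact sub_eq_zero.1 (Prod.ext e3 e4)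

namespace Setup

variable {r : ℕ∞} {f : T2 → T2} {ω : R2} (S : Setup r f ω)

theorem rigid_small {ε : ℝ} (hε : 0 < ε) (N : ℕ) :
    ∃ n, N ≤ n ∧ 1 ≤ n ∧ ∃ v, ‖(n : ℝ) • ω - intVec v‖ ≤ ε ∧
      ∀ z, ‖S.F^[n] z - intVec v - z‖ ≤ ε := by
  have hA : 1 ≤ max 1 (1 / ε) := le_max_left _ _
  obtain ⟨n, hn, h1, v, hv, hz⟩ := frequently_atTop.1 (S.rigid hA) N
  have h2 : 1 / ε ≤ max 1 (1 / ε) ^ n :=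
    (le_max_right _ _).trans (le_self_pow₀ hA (by omega))
  have key : ∀ a : ℝ, 0 ≤ a → a * max 1 (1 / ε) ^ n ≤ 1 → a ≤ ε := fun a ha h => by
    have h3 : a * (1 / ε) ≤ 1 := (mul_le_mul_of_nonneg_left h2 ha).trans h
    rwa [mul_one_div, div_le_one hε] at h3
  exact ⟨n, hn, h1, v, key _ (norm_nonneg _) hv, fun z => key _ (norm_nonneg _) (hz z)⟩

theorem const_real (S : Setup r f ω) {u : T2 → ℝ} (hu : Continuous u) (hf : ∀ x, u (f x) = u x)
    (x y : T2) : u x = u y := by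
  suffices h : ∀ x y, ¬ u x < u y from le_antisymm (not_lt.1 (h y x)) (not_lt.1 (h x y))
  intro x y hxy
  obtain ⟨c, hxc, hcy⟩ := exists_between hxy
  obtain ⟨a, rfl⟩ := pr2_surj x
  obtain ⟨b, rfl⟩ := pr2_surj y
  have hut : Continuous (u ∘ pr2) := hu.comp pr2_cont
  obtain ⟨η, hη, hV⟩ := Metric.isOpen_iff.1 (isOpen_Iio.preimage hut) a hxc
  obtain ⟨η', hη', hV'⟩ := Metric.isOpen_iff.1 (isOpen_Ioi.preimage hut) b hcy
  have hfn : ∀ (n : ℕ) x, u (f^[n] x) = u x := fun n => by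
    induction n with
    | zero => intro x; rfl
    | succ n ih => intro x; rw [Function.iterate_succ_apply, ih, hf]
  have hG : ∀ n v z, (u ∘ pr2) (S.G n v z) = (u ∘ pr2) z := fun n v z => by
    simp only [Function.comp_apply]
    rw [S.G_lift, hfn]
  obtain ⟨n, -, hn, v, -, hnz⟩ := S.rigid_small (half_pos hη) 0
  have hδ1 : (n : ℝ) * ω.1 - v.1 ≠ 0 := fun h => by
    have := (S.hti n 0 (-v.1) (by push_cast; linarith)).1
    omega
  obtain ⟨N, hN⟩ := exists_nat_gt ((n : ℝ) / |(n : ℝ) * ω.1 - v.1|)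
  obtain ⟨n', hNn', hn', v', hd', hnz'⟩ := S.rigid_small
    (ε := min 1 (η' / 2)) (by positivity) N
  have hdet : ((n : ℝ) • ω - intVec v).1 * ((n' : ℝ) • ω - intVec v').2
      - ((n : ℝ) • ω - intVec v).2 * ((n' : ℝ) • ω - intVec v').1 ≠ 0 := by
    intro h
    simp only [intVec, Prod.fst_sub, Prod.snd_sub, Prod.smul_fst, Prod.smul_snd,
        smul_eq_mul] at h
    have h1 := (S.hti (n' * v.2 - n * v'.2) (n * v'.1 - n' * v.1) (v.1 * v'.2 - v.2 * v'.1)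
      (by push_cast; linear_combination h)).2.1
    have h1' : (n : ℝ) * v'.1 - n' * v.1 = 0 := by exact_mod_cast h1
    have h2 : |(n' : ℝ) * ω.1 - v'.1| ≤ 1 :=
      (norm_fst_le ((n' : ℝ) • ω - intVec v')).trans (hd'.trans (min_le_left _ _))
    have h3 : (n' : ℝ) * |(n : ℝ) * ω.1 - v.1| = n * |(n' : ℝ) * ω.1 - v'.1| := by
      rw [← Nat.abs_cast n', ← Nat.abs_cast n, ← abs_mul, ← abs_mul, Nat.abs_cast, Nat.abs_cast]
      congr 1
      linear_combination h1'
    rw [div_lt_iff₀ (abs_pos.2 hδ1)] at hN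
    have h4 : (N : ℝ) * |(n : ℝ) * ω.1 - v.1| ≤ (n' : ℝ) * |(n : ℝ) * ω.1 - v.1| := by
      have : (N : ℝ) ≤ n' := by exact_mod_cast hNn'
      gcongr
    have h5 : (n : ℝ) * |(n' : ℝ) * ω.1 - v'.1| ≤ n * 1 := by gcongr
    linarith
  obtain ⟨α, hα, ⟨C, hC⟩, hαV⟩ := exists_path S.hκ (S.G_H n v) (hG n v) (convex_ball a η)
    (Metric.mem_ball_self hη) (by
      rw [Metric.mem_ball, dist_eq_norm, S.G_apply]; linarith [hnz a])
  obtain ⟨β, hβ, ⟨C', hC'⟩, hβV⟩ := exists_path S.hκ (S.G_H n' v') (hG n' v') (convex_ball b η')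
    (Metric.mem_ball_self hη') (by
      rw [Metric.mem_ball, dist_eq_norm, S.G_apply]
      linarith [hnz' b, min_le_right 1 (η' / 2)])
  obtain ⟨s, t, hst⟩ := paths_cross hα hβ hC hC' hdet
  obtain ⟨p, hp, hp2⟩ := hαV s
  obtain ⟨q, hq, hq2⟩ := hβV t
  have h1 : (u ∘ pr2) p < c := hV hp
  have h2 : c < (u ∘ pr2) q := hV' hq
  rw [← hp2, hst, hq2] at h1
  linarith

theorem const_metric (S : Setup r f ω) {X : Type*} [MetricSpace X] {u : T2 → X} (hu : Continuous u)
    (hf : ∀ x, u (f x) = u x) (x y : T2) : u x = u y := by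
  have := S.const_real (u := fun z => dist (u z) (u y)) (by fun_prop) (fun z => by rw [hf]) x y
  simpa using this

end Setup

/-- Membership in the centralizer. -/
def InGF (r : ℕ∞) (f g : T2 → T2) : Prop :=
  IsCrDiffeo (r - 1) g ∧ IsotopicToId g ∧
    MeasurePreserving g (volume : Measure T2) volume ∧ g ∘ f = f ∘ g

theorem IsCrDiffeo.comp {r : ℕ∞} {f g : T2 → T2} (hf : IsCrDiffeo r f) (hg : IsCrDiffeo r g) :
    IsCrDiffeo r (f ∘ g) := by
  obtain ⟨F, Fi, l1, a1, b1, c1, d1⟩ := hf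
  obtain ⟨G, Gi, l2, a2, b2, c2, d2⟩ := hg
  refine ⟨F ∘ G, Gi ∘ Fi, fun z => ?_, a1.comp a2, b1.comp b2, c1.comp c2, d2.comp d1⟩
  simp only [Function.comp_apply]
  rw [l1, l2]

theorem IsotopicToId.comp {f g : T2 → T2} (hf : IsotopicToId f) (hg : IsotopicToId g) :
    IsotopicToId (f ∘ g) := by
  obtain ⟨a, F, b, c, d⟩ := hf
  obtain ⟨a', F', b', c', d'⟩ := hg
  refine ⟨a.comp a', F ∘ F', b.comp b', fun z => ?_, d.comp d'⟩
  simp only [Function.comp_apply]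
  rw [c, c']

theorem InGF.comp {r : ℕ∞} {f g g' : T2 → T2} (h : InGF r f g) (h' : InGF r f g') :
    InGF r f (g ∘ g') := by
  refine ⟨h.1.comp h'.1, h.2.1.comp h'.2.1, h.2.2.1.comp h'.2.2.1, ?_⟩
  rw [Function.comp_assoc, h'.2.2.2, ← Function.comp_assoc, h.2.2.2, Function.comp_assoc]

theorem InGF.id (r : ℕ∞) (f : T2 → T2) : InGF r f id :=
  ⟨⟨_root_.id, _root_.id, fun _ => rfl, fun _ => rfl, fun _ => rfl, contDiff_id, contDiff_id⟩,
    ⟨IsHomeomorph.id, _root_.id, IsHomeomorph.id, fun _ => rfl, fun _ _ => rfl⟩,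
    MeasurePreserving.id _, rfl⟩

namespace Setup

variable {r : ℕ∞} {f : T2 → T2} {ω : R2} (S : Setup r f ω)

theorem cF' : ContDiff ℝ ((r - 1 : ℕ∞) : WithTop ℕ∞) S.F :=
  S.cF.of_le (by exact_mod_cast tsub_le_self)

theorem cFi' : ContDiff ℝ ((r - 1 : ℕ∞) : WithTop ℕ∞) S.Fi :=
  S.cFi.of_le (by exact_mod_cast tsub_le_self)

theorem f_mem (S : Setup r f ω) (hf : IsotopicToId f) : InGF r f f :=
  ⟨⟨S.F, S.Fi, S.lF, S.li, S.ri, S.cF', S.cFi'⟩, hf, S.mp, rfl⟩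

theorem finv_mem (S : Setup r f ω) (hf : IsotopicToId f) :
    ∃ fi : C(T2, T2), InGF r f fi ∧ ∀ x, fi (f x) = x := by
  let e := hf.1.homeomorph
  have he : ∀ x, e x = f x := fun x => rfl
  have h1 : ∀ x, e.symm (f x) = x := fun x => by rw [← he]; exact e.symm_apply_apply x
  have h2 : ∀ x, f (e.symm x) = x := fun x => by rw [← he]; exact e.apply_symm_apply x
  have lFi : IsLift S.Fi e.symm := S.lF.inv S.ri h1
  refine ⟨⟨e.symm, e.symm.continuous⟩, ⟨⟨S.Fi, S.F, lFi, S.ri, S.li, S.cFi', S.cF'⟩,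
    ⟨e.symm.isHomeomorph, S.Fi, ?_, lFi, S.eFi⟩, ?_, ?_⟩, h1⟩
  · exact (Homeomorph.mk ⟨S.Fi, S.F, S.ri, S.li⟩ S.cFi.continuous S.cF.continuous).isHomeomorph
  · exact S.mp.symm e.toMeasurableEquiv
  · ext1 x
    simp only [ContinuousMap.coe_mk, Function.comp_apply, h1, h2]

theorem const_conj (S : Setup r f ω) {h : T2 → T2} (hc : Continuous h) {w : T2}
    (hw : ∀ x, h (f x) = h x + w) {g : T2 → T2} (hg : Continuous g) (hgf : g ∘ f = f ∘ g)
    (x y : T2) : h (g x) - h x = h (g y) - h y := by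
  refine S.const_metric (u := fun x => h (g x) - h x) (by fun_prop) (fun x => ?_) x y
  have : g (f x) = f (g x) := congrFun hgf x
  simp only [this, hw]
  abel

theorem disp_of_H {K : R2 → R2} {δ : R2} (hK : ∀ z, S.H (K z) = S.H z + δ) (z : R2) :
    ‖K z - z‖ ≤ 2 * S.κ + ‖δ‖ := by
  have e : K z - z = - (S.H (K z) - K z) + (S.H z - z) + δ := by rw [hK]; abel
  rw [e]
  have h1 := norm_add_le (- (S.H (K z) - K z) + (S.H z - z)) δ
  have h2 := norm_add_le (- (S.H (K z) - K z)) (S.H z - z)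
  rw [norm_neg] at h2
  linarith [S.hκ (K z), S.hκ z]

theorem eq_id_of_H {K : R2 ≃ₜ R2} (hv : ∀ A, MeasurableSet A → volume (K ⁻¹' A) = volume A)
    (hK : ∀ z, S.H (K z) = S.H z) (x : R2) : K x = x := by
  by_contra hx
  have hκ := S.κ0
  set d := ‖K x - x‖ with hd
  have hd0 : 0 < d := norm_pos_iff.2 (sub_ne_zero.2 hx)
  obtain ⟨ρ₁, hρ₁, hcont⟩ := Metric.continuousAt_iff.1 K.continuous.continuousAt (d / 4) (by positivity)
  set ρ := min ρ₁ (min (d / 4) 1) with hρ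
  have hρ0 : 0 < ρ := by positivity
  have hρ1 : ρ ≤ ρ₁ := min_le_left _ _
  have hρ2 : ρ ≤ d / 4 := (min_le_right _ _).trans (min_le_left _ _)
  have hρ3 : ρ ≤ 1 := (min_le_right _ _).trans (min_le_right _ _)
  obtain ⟨n, -, hn, v, hδ, hG⟩ := S.rigid_small
    (ε := min (ρ ^ 2 / (4 * S.κ + 3) ^ 2 / 2) (min (d / 4) 1)) (by positivity) 0
  have hδ1 := hδ.trans (min_le_left _ _)
  have hδ2 := hδ.trans ((min_le_right _ _).trans (min_le_right _ _))
  have hHK : ∀ z, S.H ((K.trans (S.G n v)) z) = S.H z + ((n : ℝ) • ω - intVec v) := fun z => by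
    rw [Homeomorph.trans_apply, S.G_H, hK]
  have := area_lemma (K := K.trans (S.G n v)) (S.disp_of_H hHK) (fun A hA => by
      have : (K.trans (S.G n v)) ⁻¹' A = K ⁻¹' (S.G n v ⁻¹' A) := rfl
      rw [this, hv _ ((S.G n v).continuous.measurable hA), S.G_vol n v A hA])
    S.hκ (S.delta_ne hn v) hδ2 hHK (x := x) hρ0 (by linarith) (by
      intro z hz hz2
      rw [Metric.mem_ball, dist_eq_norm] at hz hz2
      have h1 := hcont (x := z) (by rw [dist_eq_norm]; linarith)
      rw [dist_eq_norm] at h1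
      have h2 := (hG (K z)).trans ((min_le_right _ _).trans (min_le_left _ _))
      rw [← S.G_apply] at h2
      rw [Homeomorph.trans_apply] at hz2
      have h3 : d ≤ ‖K z - K x‖ + ‖S.G n v (K z) - K z‖ + ‖S.G n v (K z) - x‖ := by
        have e : K x - x = -(K z - K x) - (S.G n v (K z) - K z) + (S.G n v (K z) - x) := by abel
        rw [hd, e]
        have n1 := norm_add_le (-(K z - K x) - (S.G n v (K z) - K z)) (S.G n v (K z) - x)
        have n2 := norm_sub_le (-(K z - K x)) (S.G n v (K z) - K z)
        rw [norm_neg] at n2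
        linarith
      linarith)
  have h3 : (4 * S.κ + 3) ^ 2 * ‖(n : ℝ) • ω - intVec v‖ ≤ ρ ^ 2 / 2 := by
    calc (4 * S.κ + 3) ^ 2 * ‖(n : ℝ) • ω - intVec v‖
        ≤ (4 * S.κ + 3) ^ 2 * (ρ ^ 2 / (4 * S.κ + 3) ^ 2 / 2) := by gcongr
      _ = ρ ^ 2 / 2 := by field_simp
  nlinarith [sq_pos_of_pos hρ0]

theorem inj (S : Setup r f ω) {h : T2 → T2} (hc : Continuous h) (lH : IsLift S.H h) {w : T2}
    (hw : ∀ x, h (f x) = h x + w) {g g' : T2 → T2} (hg : InGF r f g) (hg' : InGF r f g')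
    (heq : h (g 0) - h 0 = h (g' 0) - h 0) : g = g' := by
  obtain ⟨-, ⟨cg, A, hA, lA, eA⟩, mg, cfg⟩ := hg
  obtain ⟨-, ⟨cg', A', hA', lA', eA'⟩, mg', cfg'⟩ := hg'
  obtain ⟨c₀, hc₀⟩ := pr2_surj (h (g 0) - h 0)
  have key : ∀ (g : T2 → T2) (A : R2 → R2), Continuous g → Continuous A → IsLift A g →
      g ∘ f = f ∘ g → h (g 0) - h 0 = pr2 c₀ →
      ∃ v, ∀ z, S.H (A z) = S.H z + c₀ + intVec v := by
    intro g A cg cA lA cfg hg0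
    refine lift_diff (A := fun z => S.H (A z)) (B := fun z => S.H z + c₀) (S.cH.comp cA)
      (S.cH.add continuous_const) (fun z => ?_)
    rw [lH, lA, pr2_add, lH, ← hg0, ← S.const_conj hc hw cg cfg (pr2 z) 0]
    abel
  obtain ⟨v, hv⟩ := key g A cg.continuous hA.continuous lA cfg hc₀.symm
  obtain ⟨v', hv'⟩ := key g' A' cg'.continuous hA'.continuous lA' cfg' (heq.symm.trans hc₀.symm)
  let B := hA.homeomorph
  let B' := hA'.homeomorph
  let K : R2 ≃ₜ R2 := (B.trans (Homeomorph.addRight (intVec (v' - v)))).trans B'.symm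
  have hKB : ∀ z, A' (K z) = A z + intVec (v' - v) := fun z => B'.apply_symm_apply _
  have hK : ∀ z, K z = z := by
    refine S.eq_id_of_H ?_ ?_
    · intro E hE
      have h1 : volume (B'.symm ⁻¹' E) = volume E := by
        rw [← lift_volume hA'.continuous eA' lA' mg' (B'.symm.continuous.measurable hE)]
        congr 1
        ext z
        simp only [Set.mem_preimage]
        have : B'.symm (A' z) = z := B'.symm_apply_apply z
        rw [this]
      rw [← h1]
      have : K ⁻¹' E = A ⁻¹' ((fun z => z + intVec (v' - v)) ⁻¹' (B'.symm ⁻¹' E)) := rfl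
      rw [this, lift_volume hA.continuous eA lA mg, measure_preimage_add_right]
      exact (measurable_add_const _) (B'.symm.continuous.measurable hE)
    · intro z
      have h1 := hv' (K z)
      rw [hKB, S.eH, hv, sub_eq_add_neg, intVec_add, intVec_neg] at h1
      have : S.H z = S.H z + c₀ + intVec v + (intVec v' + -intVec v) - c₀ - intVec v' := by abel
      rw [this, h1]; abel
  ext1 x
  obtain ⟨z, rfl⟩ := pr2_surj x
  have := hKB z
  rw [hK] at this
  rw [← lA, ← lA', this, pr2_add_int]

theorem part_two (S : Setup r f ω) (hf : IsotopicToId f) {h : T2 → T2} (hc : Continuous h)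
    (hs : Function.Surjective h) (lH : IsLift S.H h) {w : T2}
    (hw : ∀ x, h (f x) = h x + w) {GF : Set C(T2, T2)} (hGF : ∀ g, g ∈ GF ↔ InGF r f g)
    (hK : IsCompact GF) : TopLinearizable f := by
  have hid : ContinuousMap.id T2 ∈ GF := (hGF _).2 (InGF.id r f)
  have hne : GF.Nonempty := ⟨_, hid⟩
  obtain ⟨fi, hfi, hfif⟩ := S.finv_mem hf
  have hall : ∀ x0 x : T2, ∃ g ∈ GF, g x = x0 := by
    intro x0
    let φ : T2 → C(T2, T2) → ℝ := fun x g => dist (g x) x0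
    have hφ : Continuous ↿φ := by
      have : (↿φ) = fun p : T2 × C(T2, T2) => dist (p.2 p.1) x0 := rfl
      rw [this]; fun_prop
    have hu := hK.continuous_sInf hφ
    have hmem : ∀ x, ∃ g ∈ GF, dist (g x) x0 = sInf (φ x '' GF) := fun x =>
      (hK.image (f := φ x) (by fun_prop)).sInf_mem (hne.image _)
    have hinv : ∀ x, sInf (φ (f x) '' GF) = sInf (φ x '' GF) := fun x => by
      congr 1
      ext t
      constructor
      · rintro ⟨g, hg, rfl⟩
        exact ⟨g.comp ⟨f, hf.1.continuous⟩,
          (hGF _).2 (((hGF g).1 hg).comp (S.f_mem hf)), rfl⟩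
      · rintro ⟨g, hg, rfl⟩
        refine ⟨g.comp fi, (hGF _).2 (((hGF g).1 hg).comp hfi), ?_⟩
        simp only [φ, ContinuousMap.comp_apply, hfif]
    have h0 : sInf (φ x0 '' GF) ≤ 0 := by
      refine csInf_le ⟨0, ?_⟩ ⟨_, hid, by simp [φ]⟩
      rintro _ ⟨g, -, rfl⟩
      exact dist_nonneg
    intro x
    obtain ⟨g, hg, hgx⟩ := hmem x
    refine ⟨g, hg, dist_le_zero.1 ?_⟩
    rw [hgx, S.const_real hu hinv x x0]
    exact h0
  refine ⟨w, h, ?_, hw⟩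
  refine isHomeomorph_iff_continuous_bijective.2 ⟨hc, ?_, hs⟩
  intro x y hxy
  obtain ⟨g, hg, hgx⟩ := hall 0 x
  obtain ⟨g', hg', hgy⟩ := hall 0 y
  have hg1 := (hGF g).1 hg
  have hg2 := (hGF g').1 hg'
  have : (g : T2 → T2) = g' := by
    refine S.inj hc lH hw hg1 hg2 ?_
    rw [S.const_conj hc hw g.continuous hg1.2.2.2 0 x,
      S.const_conj hc hw g'.continuous hg2.2.2.2 0 y, hgx, hgy, hxy]
  apply hg1.2.1.1.injective
  rw [hgx, this, hgy]

theorem part_three (S : Setup r f ω) {GF : Set C(T2, T2)} (hGF : ∀ g, g ∈ GF ↔ InGF r f g)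
    (hlin : TopLinearizable f) : IsCompact (closure GF) := by
  obtain ⟨w, h, hh, hw⟩ := hlin
  let e := hh.homeomorph
  have he : ∀ x, e x = h x := fun x => rfl
  let Θ : C(T2 × T2, T2) := ⟨fun p => e.symm (e p.2 + p.1), by fun_prop⟩
  refine (isCompact_range Θ.curry.continuous).closure_of_subset ?_
  intro g hg
  refine ⟨h (g 0) - h 0, ?_⟩
  ext1 x
  have h1 := S.const_conj hh.continuous hw g.continuous ((hGF g).1 hg).2.2.2 0 x
  have : Θ.curry (h (g 0) - h 0) x = e.symm (e x + (h (g 0) - h 0)) := rfl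
  rw [this, h1, he, add_sub_cancel, ← he, e.symm_apply_apply]

end Setup

theorem cd_iterate {k : WithTop ℕ∞} {P : R2 → R2} (hP : ContDiff ℝ k P) (n : ℕ) :
    ContDiff ℝ k (P^[n]) := by
  induction n with
  | zero => exact contDiff_id
  | succ n ih => rw [Function.iterate_succ']; exact hP.comp ih

theorem norm_iter_id {i : ℕ} (hi : 1 ≤ i) (z : R2) :
    ‖iteratedFDeriv ℝ i (fun x : R2 => x) z‖ ≤ 1 := by
  obtain ⟨j, rfl⟩ := Nat.exists_eq_add_of_le' hi
  rw [← norm_iteratedFDeriv_fderiv]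
  have : fderiv ℝ (fun x : R2 => x) = fun _ => ContinuousLinearMap.id ℝ R2 := by
    ext1 x; exact fderiv_fun_id
  rw [this]
  rcases Nat.eq_zero_or_pos j with h | h
  · subst h
    rw [norm_iteratedFDeriv_zero]
    exact ContinuousLinearMap.norm_id_le
  · rw [iteratedFDeriv_const_of_ne (by omega)]
    simp

theorem iter_sub_const {P : R2 → R2} {i : ℕ} (hP : ContDiff ℝ i P) (hi : 1 ≤ i) (c z : R2) :
    iteratedFDeriv ℝ i (fun y => P y - c) z = iteratedFDeriv ℝ i P z := by
  have := iteratedFDeriv_sub (𝕜 := ℝ) hP (contDiff_const (c := c))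
  rw [iteratedFDeriv_const_of_ne (by omega), sub_zero] at this
  exact congrFun this z

theorem iter_per {P : R2 → R2} (he : Equivariant P) {i : ℕ} (hP : ContDiff ℝ i P) (hi : 1 ≤ i)
    (z : R2) (v : ℤ × ℤ) : iteratedFDeriv ℝ i P (z + intVec v) = iteratedFDeriv ℝ i P z := by
  rw [← iteratedFDeriv_comp_add_right]
  have : (fun z => P (z + intVec v)) = fun y => P y - (- intVec v) := by
    ext1 y; rw [he, sub_neg_eq_add]
  rw [this, iter_sub_const hP hi]

theorem growth {P : R2 → R2} (he : Equivariant P) {k : ℕ} (hP : ContDiff ℝ k P) :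
    ∃ E : ℝ, 1 ≤ E ∧ ∀ (n i : ℕ), 1 ≤ i → i ≤ k → ∀ z,
      ‖iteratedFDeriv ℝ i (P^[n]) z‖ ≤ E ^ n := by
  have hb : ∀ i : ℕ, ∃ C : ℝ, 0 ≤ C ∧ (1 ≤ i → i ≤ k → ∀ z, ‖iteratedFDeriv ℝ i P z‖ ≤ C) := by
    intro i
    by_cases h : 1 ≤ i ∧ i ≤ k
    · have hPi : ContDiff ℝ i P := hP.of_le (by exact_mod_cast h.2)
      obtain ⟨C, h0, hC⟩ := per_bounded (hPi.continuous_iteratedFDeriv le_rfl)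
        (iter_per he hPi h.1)
      exact ⟨C, h0, fun _ _ => hC⟩
    · exact ⟨0, le_rfl, fun h1 h2 => absurd ⟨h1, h2⟩ h⟩
  choose C hC0 hC using hb
  set M := 1 + ∑ i ∈ Finset.range (k + 1), C i with hM
  have hCM : ∀ i ≤ k, C i ≤ M := fun i hi => by
    have := Finset.single_le_sum (f := C) (fun i _ => hC0 i) (Finset.mem_range.2 (by omega : i < k + 1))
    linarith
  have hM1 : 1 ≤ M := by
    have := Finset.sum_nonneg (fun i (_ : i ∈ Finset.range (k + 1)) => hC0 i)
    linarith
  set D := (k.factorial : ℝ) * M with hD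
  have hk1 : (1 : ℝ) ≤ k.factorial := by exact_mod_cast Nat.one_le_iff_ne_zero.2 k.factorial_ne_zero
  have hD1 : 1 ≤ D := by nlinarith
  have key : ∀ (n i : ℕ), 1 ≤ i → i ≤ k → ∀ z, ‖iteratedFDeriv ℝ i (P^[n]) z‖ ≤ (D ^ n) ^ i := by
    intro n
    induction n with
    | zero =>
      intro i hi _ z
      rw [pow_zero, one_pow]
      exact norm_iter_id hi z
    | succ n ih =>
      intro i hi hik z
      have hPi : ContDiff ℝ i P := hP.of_le (by exact_mod_cast hik)
      have hPn : ContDiff ℝ i (P^[n]) := (cd_iterate hPi n)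
      have h1 := norm_iteratedFDeriv_comp_le (n := i) (N := i)
        (g := fun y => P y - P (P^[n] z)) (f := P^[n]) (hPi.sub contDiff_const) hPn le_rfl z
        (C := M) (D := D ^ n) (by
          intro j hj
          rcases Nat.eq_zero_or_pos j with h | h
          · subst h
            rw [norm_iteratedFDeriv_zero, sub_self, norm_zero]
            linarith
          · rw [iter_sub_const (hPi.of_le (by exact_mod_cast hj)) h]
            exact (hC j h (hj.trans hik) _).trans (hCM j (hj.trans hik)))
        (fun j hj1 hj2 => ih j hj1 (hj2.trans hik) z)
      have e : (fun y => P y - P (P^[n] z)) ∘ P^[n] = fun y => P^[n + 1] y - P (P^[n] z) := by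
        ext1 y
        simp only [Function.comp_apply]
        rw [Function.iterate_succ_apply']
      rw [e, iter_sub_const (cd_iterate hPi (n + 1)) hi] at h1
      refine h1.trans ?_
      have e5 : (D ^ (n + 1)) ^ i = D ^ i * (D ^ n) ^ i := by rw [pow_succ, mul_pow, mul_comm]
      rw [e5]
      have hD0 : 0 ≤ D := by linarith
      refine mul_le_mul_of_nonneg_right ?_ (by positivity)
      calc (i.factorial : ℝ) * M ≤ k.factorial * M := by
            gcongr
        _ = D := rfl
        _ ≤ D ^ i := le_self_pow₀ hD1 (by omega)
  refine ⟨D ^ k, one_le_pow₀ hD1, fun n i h1 h2 z => (key n i h1 h2 z).trans ?_⟩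
  rw [← pow_mul, ← pow_mul]
  exact pow_le_pow_right₀ hD1 (by nlinarith)

theorem interp {X : Type*} [NormedAddCommGroup X] [NormedSpace ℝ X] {ψ : R2 → X}
    (hψ : Differentiable ℝ ψ) {a b t : ℝ} (ht : 0 < t) (ha : ∀ z, ‖ψ z‖ ≤ a) (hb0 : 0 ≤ b)
    (hb : ∀ z w, ‖fderiv ℝ ψ z - fderiv ℝ ψ w‖ ≤ b * ‖z - w‖) (x : R2) :
    ‖fderiv ℝ ψ x‖ ≤ 2 * a / t + b * t := by
  have ha0 : 0 ≤ a := (norm_nonneg _).trans (ha 0)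
  refine ContinuousLinearMap.opNorm_le_of_unit_norm (by positivity) fun e he => ?_
  have hte : ‖t • e‖ = t := by rw [norm_smul, he, mul_one, Real.norm_of_nonneg ht.le]
  have h := Convex.norm_image_sub_le_of_norm_fderiv_le' (𝕜 := ℝ) (f := ψ) (C := b * t)
    (s := Metric.closedBall x t) (x := x) (y := x + t • e) (φ := fderiv ℝ ψ x)
    (fun y _ => hψ y) (fun y hy => (hb y x).trans (by
      rw [Metric.mem_closedBall, dist_eq_norm] at hy; gcongr)) (convex_closedBall x t)
    (Metric.mem_closedBall_self ht.le) (by simp [Metric.mem_closedBall, hte])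
  rw [add_sub_cancel_left, hte, map_smul] at h
  have h2 : ‖t • fderiv ℝ ψ x e‖ ≤ 2 * a + b * t * t := by
    have e2 : t • fderiv ℝ ψ x e = ψ (x + t • e) - ψ x
        - (ψ (x + t • e) - ψ x - t • fderiv ℝ ψ x e) := by abel
    rw [e2]
    have n1 := norm_sub_le (ψ (x + t • e) - ψ x) (ψ (x + t • e) - ψ x - t • fderiv ℝ ψ x e)
    have n2 := norm_sub_le (ψ (x + t • e)) (ψ x)
    linarith [ha (x + t • e), ha x]
  rw [norm_smul, Real.norm_of_nonneg ht.le] at h2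
  have e3 : 2 * a / t + b * t = (2 * a + b * t * t) / t := by field_simp
  rw [e3, le_div_iff₀ ht]
  linarith

theorem interp_iter {k : ℕ} {E : ℝ} (hE : 1 ≤ E) (i₀ : ℕ) (hi₀ : i₀ < k) :
    ∀ A : ℝ, 1 ≤ A → ∃ B : ℝ, 1 ≤ B ∧ ∀ n : ℕ, 1 ≤ n → ∀ φ : R2 → R2, ContDiff ℝ k φ →
      (∀ j : ℕ, 1 ≤ j → j ≤ k → ∀ z, ‖iteratedFDeriv ℝ j φ z‖ ≤ E ^ n) →
      (∀ z, ‖φ z‖ * B ^ n ≤ 1) →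
      ∀ i ≤ i₀, ∀ z, ‖iteratedFDeriv ℝ i φ z‖ * A ^ n ≤ 1 := by
  induction i₀ with
  | zero =>
    intro A hA
    refine ⟨A, hA, fun n hn φ _ _ h i hi z => ?_⟩
    obtain rfl : i = 0 := by omega
    rw [norm_iteratedFDeriv_zero]
    exact h z
  | succ i₀ ih =>
    intro A hA
    have hA' : 1 ≤ 8 * A ^ 2 * E := by nlinarith
    obtain ⟨B₁, hB₁, h₁⟩ := ih (by omega) A hA
    obtain ⟨B₂, hB₂, h₂⟩ := ih (by omega) (8 * A ^ 2 * E) hA'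
    refine ⟨max B₁ B₂, le_max_of_le_left hB₁, fun n hn φ hφ hj h i hi z => ?_⟩
    have g₁ := h₁ n hn φ hφ hj (fun z => le_trans (by gcongr; exact le_max_left _ _) (h z))
    have g₂ := h₂ n hn φ hφ hj (fun z => le_trans (by gcongr; exact le_max_right _ _) (h z))
    rcases Nat.lt_or_ge i (i₀ + 1) with hlt | hge
    · exact g₁ i (by omega) z
    obtain rfl : i = i₀ + 1 := by omega
    rw [← norm_fderiv_iteratedFDeriv]
    have hA0 : 0 < A := by linarith
    have hE0 : 0 < E := by linarith
    have hd1 : Differentiable ℝ (iteratedFDeriv ℝ i₀ φ) :=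
      hφ.differentiable_iteratedFDeriv (by exact_mod_cast (by omega : i₀ < k))
    have hd2 : Differentiable ℝ (iteratedFDeriv ℝ (i₀ + 1) φ) :=
      hφ.differentiable_iteratedFDeriv (by exact_mod_cast hi₀)
    have hlip : ∀ x y, ‖fderiv ℝ (iteratedFDeriv ℝ i₀ φ) x - fderiv ℝ (iteratedFDeriv ℝ i₀ φ) y‖
        ≤ E ^ n * ‖x - y‖ := by
      intro x y
      have e1 : ‖fderiv ℝ (iteratedFDeriv ℝ i₀ φ) x - fderiv ℝ (iteratedFDeriv ℝ i₀ φ) y‖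
          = ‖iteratedFDeriv ℝ (i₀ + 1) φ x - iteratedFDeriv ℝ (i₀ + 1) φ y‖ := by
        rw [iteratedFDeriv_succ_eq_comp_left]
        simp only [Function.comp_apply]
        exact (dist_eq_norm _ _).symm.trans ((LinearIsometryEquiv.dist_map
          (continuousMultilinearCurryLeftEquiv ℝ
          (fun _ : Fin (i₀ + 1) => R2) R2).symm _ _).symm.trans (dist_eq_norm _ _))
      rw [e1]
      refine convex_univ.norm_image_sub_le_of_norm_fderiv_le (𝕜 := ℝ)
        (fun x _ => hd2 x) (fun x _ => ?_) (Set.mem_univ y) (Set.mem_univ x)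
      rw [norm_fderiv_iteratedFDeriv]
      exact hj _ (by omega) (by omega) x
    have hq0 : 0 < (8 * A ^ 2 * E) ^ n := by positivity
    have ht0 : 0 < (2 * A * E) ^ n := by positivity
    have := interp hd1 (t := ((2 * A * E) ^ n)⁻¹) (a := ((8 * A ^ 2 * E) ^ n)⁻¹) (b := E ^ n)
      (by positivity) (fun z => by
        rw [← one_div, le_div_iff₀ hq0]; exact g₂ i₀ le_rfl z) (by positivity) hlip z
    have e : (2 * ((8 * A ^ 2 * E) ^ n)⁻¹ / ((2 * A * E) ^ n)⁻¹ + E ^ n * ((2 * A * E) ^ n)⁻¹) * A ^ n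
        = 2 * (1 / 4) ^ n + (1 / 2) ^ n := by
      have : (8 * A ^ 2 * E) ^ n = 4 ^ n * 2 ^ n * (A ^ n) ^ 2 * E ^ n := by
        rw [← mul_pow, ← pow_mul, mul_comm n 2, pow_mul, ← mul_pow, ← mul_pow]; norm_num
      rw [this, mul_pow, mul_pow, div_pow, div_pow, one_pow]
      field_simp
    have hn' : ∀ c : ℝ, 0 ≤ c → c ≤ 1 → c ^ n ≤ c := fun c h0 h1 =>
      pow_le_of_le_one h0 h1 (by omega)
    calc _ ≤ (2 * ((8 * A ^ 2 * E) ^ n)⁻¹ / ((2 * A * E) ^ n)⁻¹ + E ^ n * ((2 * A * E) ^ n)⁻¹) * A ^ n := by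
          gcongr
      _ = 2 * (1 / 4) ^ n + (1 / 2) ^ n := e
      _ ≤ 1 := by linarith [hn' (1 / 4) (by norm_num) (by norm_num), hn' (1 / 2) (by norm_num) (by norm_num)]

theorem good_step {P : R2 → R2} (he : Equivariant P) {k : ℕ} (hP : ContDiff ℝ k P) {L : ℝ}
    (hL1 : 1 ≤ L) (hL : ∀ (n : ℕ) z w, ‖P^[n] z - P^[n] w‖ ≤ L ^ n * ‖z - w‖) {A : ℝ} (hA : 1 ≤ A) :
    ∃ B : ℝ, 1 ≤ B ∧ ∀ (n : ℕ) (u : ℤ × ℤ), 1 ≤ n →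
      (∀ z, ‖P^[n] z - intVec u - z‖ * B ^ n ≤ 1) → ∀ N ≤ n, ∀ i < k, ∀ z,
        ‖iteratedFDeriv ℝ i (fun z => P^[N + n] z - intVec u - P^[N] z) z‖ * A ^ n ≤ 1 := by
  rcases Nat.eq_zero_or_pos k with hk | hk
  · exact ⟨1, le_rfl, fun n u _ _ N _ i hi => by omega⟩
  obtain ⟨E, hE, hg⟩ := growth he hP
  obtain ⟨B, hB, h⟩ := interp_iter (k := k) (E := 2 * E ^ 2) (by nlinarith) (k - 1) (by omega) A hA
  refine ⟨L * B, by nlinarith, fun n u hn hz N hN i hi z => ?_⟩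
  refine h n hn _ ?_ ?_ ?_ i (by omega) z
  · exact ((cd_iterate hP _).sub contDiff_const).sub (cd_iterate hP _)
  · intro j hj1 hj2 z
    have hPj : ContDiff ℝ j P := hP.of_le (by exact_mod_cast hj2)
    have e : (fun z => P^[N + n] z - intVec u - P^[N] z)
        = (fun z => P^[N + n] z - intVec u) - P^[N] := rfl
    rw [e, iteratedFDeriv_sub ((cd_iterate hPj _).sub contDiff_const) (cd_iterate hPj _), Pi.sub_apply,
      iter_sub_const (cd_iterate hPj _) hj1]
    have h1 := hg (N + n) j hj1 hj2 z
    have h2 := hg N j hj1 hj2 z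
    have h3 : E ^ (N + n) ≤ (E ^ 2) ^ n := by
      rw [← pow_mul]; exact pow_le_pow_right₀ hE (by omega)
    have h4 : E ^ N ≤ (E ^ 2) ^ n := by
      rw [← pow_mul]; exact pow_le_pow_right₀ hE (by omega)
    have h5 : (2 : ℝ) ≤ 2 ^ n := le_self_pow₀ (by norm_num) (by omega)
    rw [mul_pow]
    have h6 : 0 ≤ (E ^ 2) ^ n := by positivity
    calc _ ≤ _ := norm_sub_le _ _
      _ ≤ 2 * (E ^ 2) ^ n := by linarith
      _ ≤ _ := by gcongr
  · intro z
    have e : P^[N + n] z - intVec u - P^[N] z = P^[N] (P^[n] z - intVec u) - P^[N] z := by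
      rw [(he.iterate N).sub_int, Function.iterate_add_apply]
    rw [e]
    have h1 := hL N (P^[n] z - intVec u) z
    have h2 : L ^ N ≤ L ^ n := pow_le_pow_right₀ hL1 hN
    have hL0 : 0 < L := by linarith
    calc _ ≤ L ^ n * ‖P^[n] z - intVec u - z‖ * B ^ n := by
          gcongr
          exact h1.trans (by gcongr)
      _ = ‖P^[n] z - intVec u - z‖ * (L * B) ^ n := by rw [mul_pow]; ring
      _ ≤ 1 := hz z

namespace Setup

variable {r : ℕ∞} {f : T2 → T2} {ω : R2} (S : Setup r f ω)

theorem lip_it_inv (n : ℕ) (z w : R2) : ‖S.Fi^[n] z - S.Fi^[n] w‖ ≤ S.L ^ n * ‖z - w‖ := by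
  induction n with
  | zero => simp
  | succ n ih =>
    rw [Function.iterate_succ_apply', Function.iterate_succ_apply', pow_succ']
    refine (S.hLFi _ _).trans ?_
    rw [mul_assoc]
    exact mul_le_mul_of_nonneg_left ih (by linarith [S.hL1])

theorem good (m : ℕ) {ε : ℝ} (hε : 0 < ε) (N₀ : ℕ) :
    ∃ n, N₀ ≤ n ∧ 1 ≤ n ∧ ∃ v, ‖(n : ℝ) • ω - intVec v‖ ≤ ε ∧ ∀ N ≤ n, ∀ i : ℕ, i ≤ m →
      ((i + 1 : ℕ) : ℕ∞) ≤ r → ∀ z,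
      ‖iteratedFDeriv ℝ i (fun z => S.F^[N + n] z - intVec v - S.F^[N] z) z‖ ≤ (1 / 2) ^ m ∧
      ‖iteratedFDeriv ℝ i (fun z => S.Fi^[N + n] z - intVec (-v) - S.Fi^[N] z) z‖ ≤ (1 / 2) ^ m := by
  obtain ⟨k, hkr, hk⟩ : ∃ k : ℕ, (k : ℕ∞) ≤ r ∧
      ∀ i : ℕ, i ≤ m → ((i + 1 : ℕ) : ℕ∞) ≤ r → i < k := by
    by_cases h : ((m + 1 : ℕ) : ℕ∞) ≤ r
    · exact ⟨m + 1, h, fun i hi _ => by omega⟩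
    · have hr : r ≠ ⊤ := fun h' => h (h' ▸ le_top)
      lift r to ℕ using hr
      exact ⟨r, le_rfl, fun i _ hi => by exact_mod_cast hi⟩
  have hkr' : ((k : ℕ) : WithTop ℕ∞) ≤ (r : WithTop ℕ∞) := by exact_mod_cast hkr
  have h2m : (1 : ℝ) ≤ 2 ^ m := one_le_pow₀ (by norm_num)
  obtain ⟨B₁, hB₁, h₁⟩ := good_step S.eF (S.cF.of_le hkr') S.hL1 S.lip_it h2m
  obtain ⟨B₂, hB₂, h₂⟩ := good_step S.eFi (S.cFi.of_le hkr') S.hL1 S.lip_it_inv h2m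
  set A := max (max B₁ B₂) (1 / ε) with hA
  have hA1 : B₁ ≤ A := (le_max_left _ _).trans (le_max_left _ _)
  have hA2 : B₂ ≤ A := (le_max_right _ _).trans (le_max_left _ _)
  have hA3 : 1 / ε ≤ A := le_max_right _ _
  obtain ⟨n, hn, h1, v, hv, hz⟩ := frequently_atTop.1 (S.rigid (hB₁.trans hA1)) N₀
  have fin : ∀ a : ℝ, 0 ≤ a → a * (2 ^ m) ^ n ≤ 1 → a ≤ (1 / 2) ^ m := fun a ha h => by
    have h3 : (2 : ℝ) ^ m ≤ (2 ^ m) ^ n := le_self_pow₀ h2m (by omega)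
    have h4 : a * 2 ^ m ≤ 1 := (mul_le_mul_of_nonneg_left h3 ha).trans h
    rwa [div_pow, one_pow, le_div_iff₀ (by positivity)]
  refine ⟨n, hn, h1, v, ?_, fun N hN i him hir z => ⟨fin _ (norm_nonneg _) ?_, fin _ (norm_nonneg _) ?_⟩⟩
  · have h3 : ‖(n : ℝ) • ω - intVec v‖ * (1 / ε) ≤ 1 :=
      (mul_le_mul_of_nonneg_left (hA3.trans (le_self_pow₀ (hB₁.trans hA1) (by omega)))
        (norm_nonneg _)).trans hv
    rwa [mul_one_div, div_le_one hε] at h3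
  · refine h₁ n v h1 (fun z => ?_) N hN i (hk i him hir) z
    exact le_trans (by gcongr) (hz z)
  · refine h₂ n (-v) h1 (fun z => ?_) N hN i (hk i him hir) z
    refine le_trans ?_ (hz (S.Fi^[n] z))
    have : S.F^[n] (S.Fi^[n] z) = z := (S.ri.iterate n) z
    rw [this, intVec_neg, sub_neg_eq_add, ← norm_neg]
    have e : -(S.Fi^[n] z + intVec v - z) = z - intVec v - S.Fi^[n] z := by abel
    rw [e]
    gcongr

end Setup

theorem limit_smooth {k : ℕ∞} {P : ℕ → R2 → R2} (h0 : ∀ z, P 0 z = z)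
    (hP : ∀ m, ContDiff ℝ k (P m))
    (hb : ∀ m i : ℕ, i ≤ m → (i : ℕ∞) ≤ k → ∀ z,
      ‖iteratedFDeriv ℝ i (fun z => P (m + 1) z - P m z) z‖ ≤ (1 / 2) ^ m) :
    ∃ Q : R2 → R2, ContDiff ℝ k Q ∧ TendstoUniformly P Q atTop := by
  have hsum : Summable fun m : ℕ => (1 / 2 : ℝ) ^ m := summable_geometric_two
  have hc := contDiff_tsum_of_eventually (𝕜 := ℝ) (N := k)
    (f := fun (m : ℕ) z => P (m + 1) z - P m z) (v := fun _ m => (1 / 2 : ℝ) ^ m)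
    (fun m => (hP (m + 1)).sub (hP m)) (fun _ _ => hsum) (fun i hi => by
      rw [Nat.cofinite_eq_atTop]
      filter_upwards [eventually_ge_atTop i] with m hm
      exact hb m i hm (by exact_mod_cast hi))
  have ht := tendstoUniformly_tsum_nat (f := fun (m : ℕ) z => P (m + 1) z - P m z) hsum
    (fun m z => by
      have := hb m 0 (Nat.zero_le _) (by simp) z
      rwa [norm_iteratedFDeriv_zero] at this)
  refine ⟨fun z => z + ∑' m, (P (m + 1) z - P m z), contDiff_id.add hc, ?_⟩
  have e : ∀ m z, P m z = z + ∑ j ∈ Finset.range m, (P (j + 1) z - P j z) := by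
    intro m z
    rw [Finset.sum_range_sub (fun j => P j z), h0]; abel
  rw [Metric.tendstoUniformly_iff] at ht ⊢
  intro ε hε
  filter_upwards [ht ε hε] with m hm z
  rw [e m z, dist_add_left]
  exact hm z

theorem code_sep {δ : ℕ → R2} (hδ : ∀ j, ‖δ (j + 1)‖ ≤ ‖δ j‖ / 4) (h0 : ∀ j, δ j ≠ 0)
    (h8 : ‖δ 0‖ ≤ 1 / 8) {a b : ℕ → Bool} (hab : a ≠ b) {ca cb : R2}
    (ta : Tendsto (fun m => ∑ j ∈ Finset.range m, if a j then δ j else 0) atTop (𝓝 ca))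
    (tb : Tendsto (fun m => ∑ j ∈ Finset.range m, if b j then δ j else 0) atTop (𝓝 cb)) :
    0 < ‖ca - cb‖ ∧ ‖ca - cb‖ < 1 := by
  have hex : ∃ j, a j ≠ b j := by
    by_contra! h
    exact hab (funext h)
  classical
  set j₀ := Nat.find hex with hj
  have hj1 : a j₀ ≠ b j₀ := Nat.find_spec hex
  have hj2 : ∀ j < j₀, a j = b j := fun j h => by
    have := Nat.find_min hex h
    push Not at this
    exact this
  set s : R2 := (if a j₀ then δ j₀ else 0) - (if b j₀ then δ j₀ else 0) with hs
  have hsn : ‖s‖ = ‖δ j₀‖ := by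
    rw [hs]
    cases ha : a j₀ <;> cases hb : b j₀ <;> simp_all
  have ht8 : ∀ j, ‖δ j‖ ≤ 1 / 8 := fun j => by
    induction j with
    | zero => exact h8
    | succ j ih => linarith [hδ j, norm_nonneg (δ j)]
  have hind : ∀ m, ‖(∑ j ∈ Finset.range (j₀ + 1 + m), if a j then δ j else 0)
      - (∑ j ∈ Finset.range (j₀ + 1 + m), if b j then δ j else 0) - s‖
      ≤ (‖δ j₀‖ - 4 * ‖δ (j₀ + 1 + m)‖) / 3 := by
    intro m
    induction m with
    | zero =>
      have e : (∑ j ∈ Finset.range j₀, if a j then δ j else 0)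
          = ∑ j ∈ Finset.range j₀, if b j then δ j else 0 :=
        Finset.sum_congr rfl fun j h => by rw [hj2 j (Finset.mem_range.1 h)]
      rw [add_zero, Finset.sum_range_succ, Finset.sum_range_succ, e, hs]
      rw [add_sub_add_left_eq_sub, sub_self, norm_zero]
      linarith [hδ j₀]
    | succ m ih =>
      rw [← add_assoc, Finset.sum_range_succ, Finset.sum_range_succ]
      set k := j₀ + 1 + m
      set A := ∑ j ∈ Finset.range k, if a j then δ j else 0
      set B := ∑ j ∈ Finset.range k, if b j then δ j else 0
      have h1 : ‖(if a k then δ k else 0) - (if b k then δ k else 0)‖ ≤ ‖δ k‖ := by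
        cases a k <;> cases b k <;> simp
      have e : A + (if a k then δ k else 0) - (B + (if b k then δ k else 0)) - s
          = (A - B - s) + ((if a k then δ k else 0) - (if b k then δ k else 0)) := by abel
      rw [e]
      refine (norm_add_le _ _).trans ?_
      linarith [hδ k]
  have hlim : ‖ca - cb - s‖ ≤ ‖δ j₀‖ / 3 := by
    refine le_of_tendsto ((ta.sub tb).sub_const s).norm ?_
    filter_upwards [eventually_ge_atTop (j₀ + 1)] with m hm
    obtain ⟨q, rfl⟩ := Nat.exists_eq_add_of_le hm
    refine (hind q).trans ?_
    linarith [norm_nonneg (δ (j₀ + 1 + q))]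
  have hp : 0 < ‖δ j₀‖ := norm_pos_iff.2 (h0 j₀)
  have n1 : ‖s‖ ≤ ‖ca - cb‖ + ‖ca - cb - s‖ := by
    have := norm_sub_le (ca - cb) (ca - cb - s)
    rwa [sub_sub_cancel] at this
  have n2 : ‖ca - cb‖ ≤ ‖ca - cb - s‖ + ‖s‖ := by
    have := norm_add_le (ca - cb - s) s
    rwa [sub_add_cancel] at this
  constructor <;> linarith [ht8 j₀]

namespace Setup

variable {r : ℕ∞} {f : T2 → T2} {ω : R2} (S : Setup r f ω)

theorem limit_mem (hf : IsotopicToId f) {N : ℕ → ℕ} {V : ℕ → ℤ × ℤ} {Q Q' : R2 → R2}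
    (hQ : ContDiff ℝ ((r - 1 : ℕ∞) : WithTop ℕ∞) Q)
    (hQ' : ContDiff ℝ ((r - 1 : ℕ∞) : WithTop ℕ∞) Q')
    (tQ : TendstoUniformly (fun m z => S.F^[N m] z - intVec (V m)) Q atTop)
    (tQ' : TendstoUniformly (fun m z => S.Fi^[N m] z - intVec (-(V m))) Q' atTop) :
    ∃ p : C(T2, T2), IsLift Q p ∧ InGF r f p := by
  have l1 : Function.LeftInverse Q' Q := fun z => by
    have h1 := tQ'.tendsto_comp (x := Q z) hQ'.continuous.continuousAt (tQ.tendsto_at z)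
    refine tendsto_nhds_unique h1 ?_
    refine tendsto_const_nhds.congr fun m => ?_
    rw [(S.eFi.iterate _).sub_int, intVec_neg, (S.li.iterate (N m)) z]
    abel
  have l2 : Function.RightInverse Q' Q := fun z => by
    have h1 := tQ.tendsto_comp (x := Q' z) hQ.continuous.continuousAt (tQ'.tendsto_at z)
    refine tendsto_nhds_unique h1 ?_
    refine tendsto_const_nhds.congr fun m => ?_
    rw [(S.eF.iterate _).sub_int, intVec_neg, (S.ri.iterate (N m)) z]
    abel
  have eQ : Equivariant Q := fun z v => by
    refine tendsto_nhds_unique (tQ.tendsto_at (z + intVec v)) ?_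
    refine ((tQ.tendsto_at z).add_const (intVec v)).congr fun m => ?_
    rw [S.eF.iterate (N m)]
    abel
  have eQ' : Equivariant Q' := eQ.inv l1 l2
  obtain ⟨p, lp⟩ := Equivariant.descend hQ.continuous eQ
  obtain ⟨q, lq⟩ := Equivariant.descend hQ'.continuous eQ'
  have qp : Function.LeftInverse q p := fun x => by
    obtain ⟨z, rfl⟩ := pr2_surj x
    rw [← lp, ← lq, l1]
  have pq : Function.RightInverse q p := fun x => by
    obtain ⟨z, rfl⟩ := pr2_surj x
    rw [← lq, ← lp, l2]
  have tp : ∀ x, Tendsto (fun m => f^[N m] x) atTop (𝓝 (p x)) := fun x => by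
    obtain ⟨z, rfl⟩ := pr2_surj x
    rw [← lp]
    refine ((pr2_cont.tendsto _).comp (tQ.tendsto_at z)).congr fun m => ?_
    simp only [Function.comp_apply]
    rw [pr2_sub_int, S.lF.iterate (N m)]
  refine ⟨p, lp, ⟨Q, Q', lp, l1, l2, hQ, hQ'⟩, ⟨?_, Q, ?_, lp, eQ⟩, ?_, ?_⟩
  · exact (Homeomorph.mk ⟨p, q, qp, pq⟩ p.continuous q.continuous).isHomeomorph
  · exact (Homeomorph.mk ⟨Q, Q', l1, l2⟩ hQ.continuous hQ'.continuous).isHomeomorph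
  · refine ⟨p.continuous.measurable, ?_⟩
    have : IsFiniteMeasure (Measure.map p (volume : Measure T2)) :=
      Measure.isFiniteMeasure_map _ _
    refine ext_of_forall_integral_eq_of_IsFiniteMeasure fun φ => ?_
    rw [integral_map p.continuous.aemeasurable φ.continuous.aestronglyMeasurable]
    have h1 : Tendsto (fun m => ∫ x : T2, φ (f^[N m] x)) atTop (𝓝 (∫ x : T2, φ (p x))) := by
      refine tendsto_integral_of_dominated_convergence (fun _ => ‖φ‖) (fun m => ?_)
        (integrable_const _) (fun m => ?_) ?_
      · exact (φ.continuous.comp (hf.1.continuous.iterate _)).aestronglyMeasurable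
      · exact Eventually.of_forall fun x => φ.norm_coe_le_norm _
      · exact Eventually.of_forall fun x => (φ.continuous.tendsto _).comp (tp x)
    refine tendsto_nhds_unique h1 ?_
    refine tendsto_const_nhds.congr fun m => ?_
    have hm := S.mp.iterate (N m)
    have := integral_map (μ := (volume : Measure T2)) hm.measurable.aemeasurable
      (f := φ) φ.continuous.aestronglyMeasurable
    rw [hm.map_eq] at this
    exact this
  · ext1 x
    refine tendsto_nhds_unique (tp (f x)) ?_
    refine ((hf.1.continuous.tendsto _).comp (tp x)).congr fun m => ?_
    simp only [Function.comp_apply]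
    rw [← Function.iterate_succ_apply' f, Function.iterate_succ_apply]

theorem seq_exists (S : Setup r f ω) : ∃ (n : ℕ → ℕ) (v : ℕ → ℤ × ℤ), (∀ j, 1 ≤ n j) ∧ (∀ j, 2 * n j ≤ n (j + 1)) ∧
    ‖(n 0 : ℝ) • ω - intVec (v 0)‖ ≤ 1 / 8 ∧
    (∀ j, ‖(n (j + 1) : ℝ) • ω - intVec (v (j + 1))‖ ≤ ‖(n j : ℝ) • ω - intVec (v j)‖ / 4) ∧
    ∀ m, ∀ N ≤ n m, ∀ i : ℕ, i ≤ m → ((i + 1 : ℕ) : ℕ∞) ≤ r → ∀ z,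
      ‖iteratedFDeriv ℝ i (fun z => S.F^[N + n m] z - intVec (v m) - S.F^[N] z) z‖
        ≤ (1 / 2) ^ m ∧
      ‖iteratedFDeriv ℝ i (fun z => S.Fi^[N + n m] z - intVec (-(v m)) - S.Fi^[N] z) z‖
        ≤ (1 / 2) ^ m := by
  have step : ∀ (m : ℕ) (p : {p : ℕ × (ℤ × ℤ) // 1 ≤ p.1}),
      ∃ q : {p : ℕ × (ℤ × ℤ) // 1 ≤ p.1}, 2 * p.1.1 ≤ q.1.1 ∧
        ‖(q.1.1 : ℝ) • ω - intVec q.1.2‖ ≤ ‖(p.1.1 : ℝ) • ω - intVec p.1.2‖ / 4 ∧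
        ∀ N ≤ q.1.1, ∀ i : ℕ, i ≤ m + 1 → ((i + 1 : ℕ) : ℕ∞) ≤ r → ∀ z,
      ‖iteratedFDeriv ℝ i (fun z => S.F^[N + q.1.1] z - intVec (q.1.2) - S.F^[N] z) z‖
        ≤ (1 / 2) ^ (m + 1) ∧
      ‖iteratedFDeriv ℝ i (fun z => S.Fi^[N + q.1.1] z - intVec (-(q.1.2)) - S.Fi^[N] z) z‖
        ≤ (1 / 2) ^ (m + 1) := fun m p => by
    have hp : 0 < ‖(p.1.1 : ℝ) • ω - intVec p.1.2‖ / 4 :=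
      div_pos (norm_pos_iff.2 (S.delta_ne p.2 _)) (by norm_num)
    obtain ⟨n, h1, h2, v, h3, h4⟩ := S.good (m + 1) hp (2 * p.1.1)
    exact ⟨⟨(n, v), h2⟩, h1, h3, h4⟩
  choose nx hx1 hx2 hx3 using step
  obtain ⟨n0, -, h2, v0, h3, h4⟩ := S.good 0 (ε := 1 / 8) (by norm_num) 0
  let s : ℕ → {p : ℕ × (ℤ × ℤ) // 1 ≤ p.1} :=
    fun j => Nat.rec ⟨(n0, v0), h2⟩ (fun m p => nx m p) j
  refine ⟨fun j => (s j).1.1, fun j => (s j).1.2, fun j => (s j).2, fun j => hx1 j (s j), h3,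
    fun j => hx2 j (s j), fun m => ?_⟩
  cases m with
  | zero => exact h4
  | succ m => exact hx3 m (s m)

theorem uncountable (S : Setup r f ω) (hr : 2 ≤ r) (hf : IsotopicToId f) {GF : Set C(T2, T2)}
    (hGF : ∀ g, g ∈ GF ↔ InGF r f g) : ¬ GF.Countable := by
  obtain ⟨n, v, hn1, hn2, h8, h4, hgood⟩ := S.seq_exists
  have hir : ∀ i : ℕ, (i : ℕ∞) ≤ r - 1 → ((i + 1 : ℕ) : ℕ∞) ≤ r := fun i hi => by
    have := add_le_add_left hi 1
    rw [tsub_add_cancel_of_le (one_le_two.trans hr)] at this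
    exact_mod_cast this
  have main : ∀ a : ℕ → Bool, ∃ (p : C(T2, T2)) (Q : R2 → R2), IsLift Q p ∧ Continuous Q ∧
      InGF r f p ∧
      Tendsto (fun m => ∑ j ∈ Finset.range m, if a j then ((n j : ℝ) • ω - intVec (v j)) else 0)
        atTop (𝓝 (S.H (Q 0) - S.H 0)) := by
    intro a
    let N : ℕ → ℕ := fun m => ∑ j ∈ Finset.range m, if a j then n j else 0
    let V : ℕ → ℤ × ℤ := fun m => ∑ j ∈ Finset.range m, if a j then v j else 0
    have hN0 : N 0 = 0 := rfl
    have hV0 : V 0 = 0 := rfl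
    have hNs : ∀ m, N (m + 1) = N m + if a m then n m else 0 := fun m =>
      Finset.sum_range_succ _ _
    have hVs : ∀ m, V (m + 1) = V m + if a m then v m else 0 := fun m =>
      Finset.sum_range_succ _ _
    have hNn : ∀ m, N m ≤ n m := fun m => by
      induction m with
      | zero => simp [hN0]
      | succ m ih =>
        rw [hNs]
        have := hn2 m
        split_ifs <;> omega
    have b1 : ∀ m i : ℕ, i ≤ m → (i : ℕ∞) ≤ r - 1 → ∀ z,
        ‖iteratedFDeriv ℝ i (fun z => (S.F^[N (m + 1)] z - intVec (V (m + 1)))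
          - (S.F^[N m] z - intVec (V m))) z‖ ≤ (1 / 2) ^ m := by
      intro m i him hi z
      rw [hNs, hVs]
      by_cases ha : a m = true
      · have e : (fun z => (S.F^[N m + if a m then n m else 0] z
            - intVec (V m + if a m then v m else 0)) - (S.F^[N m] z - intVec (V m)))
            = fun z => S.F^[N m + n m] z - intVec (v m) - S.F^[N m] z := by
          ext1 z
          rw [if_pos ha, if_pos ha, intVec_add]; abel
        rw [e]
        exact (hgood m (N m) (hNn m) i him (hir i hi) z).1
      · have e : (fun z => (S.F^[N m + if a m then n m else 0] z
            - intVec (V m + if a m then v m else 0)) - (S.F^[N m] z - intVec (V m)))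
            = 0 := by
          ext1 z
          rw [if_neg ha, if_neg ha, add_zero, add_zero, sub_self]; rfl
        rw [e, iteratedFDeriv_zero]
        simp
    have b2 : ∀ m i : ℕ, i ≤ m → (i : ℕ∞) ≤ r - 1 → ∀ z,
        ‖iteratedFDeriv ℝ i (fun z => (S.Fi^[N (m + 1)] z - intVec (-(V (m + 1))))
          - (S.Fi^[N m] z - intVec (-(V m)))) z‖ ≤ (1 / 2) ^ m := by
      intro m i him hi z
      rw [hNs, hVs]
      by_cases ha : a m = true
      · have e : (fun z => (S.Fi^[N m + if a m then n m else 0] z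
            - intVec (-(V m + if a m then v m else 0))) - (S.Fi^[N m] z - intVec (-(V m))))
            = fun z => S.Fi^[N m + n m] z - intVec (-(v m)) - S.Fi^[N m] z := by
          ext1 z
          rw [if_pos ha, if_pos ha, intVec_neg, intVec_neg, intVec_neg, intVec_add]; abel
        rw [e]
        exact (hgood m (N m) (hNn m) i him (hir i hi) z).2
      · have e : (fun z => (S.Fi^[N m + if a m then n m else 0] z
            - intVec (-(V m + if a m then v m else 0))) - (S.Fi^[N m] z - intVec (-(V m))))
            = 0 := by
          ext1 z
          rw [if_neg ha, if_neg ha, add_zero, add_zero, sub_self]; rfl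
        rw [e, iteratedFDeriv_zero]
        simp
    obtain ⟨Q, cQ, tQ⟩ := limit_smooth (k := r - 1)
      (P := fun m z => S.F^[N m] z - intVec (V m))
      (fun z => by simp [hN0, hV0, intVec_zero])
      (fun m => (cd_iterate S.cF' _).sub contDiff_const) b1
    obtain ⟨Q', cQ', tQ'⟩ := limit_smooth (k := r - 1)
      (P := fun m z => S.Fi^[N m] z - intVec (-(V m)))
      (fun z => by simp [hN0, hV0, intVec_zero])
      (fun m => (cd_iterate S.cFi' _).sub contDiff_const) b2
    obtain ⟨p, lp, hp⟩ := S.limit_mem hf cQ cQ' tQ tQ'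
    refine ⟨p, Q, lp, cQ.continuous, hp, ?_⟩
    have hD : ∀ m, (∑ j ∈ Finset.range m, if a j then ((n j : ℝ) • ω - intVec (v j)) else 0)
        = (N m : ℝ) • ω - intVec (V m) := fun m => by
      induction m with
      | zero => simp [hN0, hV0, intVec_zero]
      | succ m ih =>
        rw [Finset.sum_range_succ, ih, hNs, hVs]
        split_ifs
        · rw [Nat.cast_add, add_smul, intVec_add]; abel
        · simp
    refine (((S.cH.tendsto _).comp (tQ.tendsto_at 0)).sub_const (S.H 0)).congr fun m => ?_
    simp only [Function.comp_apply]
    rw [hD, S.eH.sub_int, S.hHit]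
    abel
  choose p Q lQ cQ hp tD using main
  intro hcount
  have hinj : Function.Injective p := fun a b hab => by
    by_contra hne
    obtain ⟨h1, h2⟩ := code_sep (δ := fun j => (n j : ℝ) • ω - intVec (v j)) h4
      (fun j => S.delta_ne (hn1 j) _) h8 hne (tD a) (tD b)
    obtain ⟨u, hu⟩ := lift_diff (cQ a) (cQ b) (fun z => by rw [lQ a, lQ b, hab])
    have e : S.H (Q a 0) - S.H 0 - (S.H (Q b 0) - S.H 0) = intVec u := by
      rw [hu, S.eH]; abel
    rw [e] at h1 h2
    rw [intVec_small h2, norm_zero] at h1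
    exact lt_irrefl _ h1
  have h1 : (Set.range p).Countable := hcount.mono (by
    rintro _ ⟨a, rfl⟩
    exact (hGF _).2 (hp a))
  have h2 : (Set.univ : Set (ℕ → Bool)).Countable := by
    rw [← Set.image_univ] at h1
    exact Set.countable_of_injective_of_countable_image hinj.injOn h1
  have h3 : Countable (ℕ → Bool) := Set.countable_univ_iff.1 h2
  have h4 : Countable (Set ℕ) := by
    classical
    exact Function.Injective.countable (f := fun (s : Set ℕ) (k : ℕ) => decide (k ∈ s))
      (fun s t h => by ext k; simpa using congrFun h k)
  obtain ⟨g, hg⟩ := h4.exists_injective_nat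
  exact Function.cantor_injective g hg

end Setup

/-- **Theorem 1.4.** Let f be a volume-preserving C^r (r ≥ 2, possibly r = ∞) diffeomorphism of
𝕋², isotopic to the identity, regularly semi-conjugate to the translation T_ω̄ with ω̄
totally irrational and super-Liouvillean, and let G_f be its centralizers in
Diff^{r−1}(𝕋², Vol) ∩ Homeo_*(𝕋²). Then G_f is isomorphic to an uncountable subgroup of
ℝ²/ℤ²; moreover if G_f is C⁰-compact then f is topologically linearizable, and if f is
topologically linearizable then G_f is C⁰-pre-compact. -/
theorem centralizers_of_semi_conjugate_pseudo_rotation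
    (r : ℕ∞) (hr : 2 ≤ r)
    (f : T2 → T2) (ω : R2) (w : T2)
    (hw : pr2 ω = w)
    (hti : TotallyIrrationalVec ω)
    (hsl : SuperLiouville ω)
    (hiso : IsotopicToId f)
    (hcr : IsCrDiffeo r f)
    (hmp : MeasurePreserving f (volume : Measure T2) volume)
    (hsc : RegSemiConj f w)
    (GF : Set C(T2, T2))
    (hGF : GF = {g : C(T2, T2) | IsCrDiffeo (r - 1) ⇑g ∧ IsotopicToId ⇑g ∧
      MeasurePreserving ⇑g (volume : Measure T2) volume ∧ ⇑g ∘ f = f ∘ ⇑g}) :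
    (∃ Φ : C(T2, T2) → T2,
        Set.InjOn Φ GF ∧
        (∀ g ∈ GF, ∀ g' ∈ GF, g.comp g' ∈ GF ∧ Φ (g.comp g') = Φ g + Φ g') ∧
        ¬ GF.Countable) ∧
      (IsCompact GF → TopLinearizable f) ∧
      (TopLinearizable f → IsCompact (closure GF)) := by
  obtain ⟨h, hc, hs, ⟨H, cH, lH, eH⟩, hw'⟩ := hsc
  obtain ⟨S, hSH⟩ := exists_setup hr hw hti hsl hiso hcr hmp cH lH eH hw'
  have hG : ∀ g, g ∈ GF ↔ InGF r f g := fun g => by rw [hGF]; exact Iff.rfl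
  rw [← hSH] at lH
  refine ⟨⟨fun g => h (g 0) - h 0, ?_, ?_, S.uncountable hr hiso hG⟩,
    fun hK => S.part_two hiso hc hs lH hw' hG hK, fun hl => S.part_three hG hl⟩
  · intro g hg g' hg' heq
    exact DFunLike.coe_injective (S.inj hc lH hw' ((hG g).1 hg) ((hG g').1 hg') heq)
  · intro g hg g' hg'
    refine ⟨(hG _).2 (((hG g).1 hg).comp ((hG g').1 hg')), ?_⟩
    have := S.const_conj hc hw' g.continuous ((hG g).1 hg).2.2.2 (g' 0) 0
    simp only [ContinuousMap.comp_apply]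
    rw [← this]
    abel
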